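/- arXiv:1008.0144 — 5 statements merged into one kernel-verified Lean document; each statement's English description precedes it below -/
import Mathlib

section
/- For every ν > −1, every t > 0 with 0 < s < t, and all x > 0, v > 0, the following 'negative-time' extension of the Chapman–Kolmogorov equation holds: ∫₀^∞ q^{(ν)}_t(v,y) · p^{(ν)}(t−s, y | x) dy = q^{(ν)}_s(v,x). -/
open MeasureTheory Real

/-- The Bessel function of the first kind `J_ν(z)`. -/
noncomputable def besselJ (ν z : ℝ) : ℝ :=
  ∑' n : ℕ, ((-1 : ℝ) ^ n / (Real.Gamma ((n : ℝ) + 1) * Real.Gamma ((n : ℝ) + 1 + ν))) *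
    (z / 2) ^ (2 * (n : ℝ) + ν)

/-- The modified Bessel function of the first kind `I_ν(z)`. -/
noncomputable def besselI (ν z : ℝ) : ℝ :=
  ∑' n : ℕ, ((1 : ℝ) / (Real.Gamma ((n : ℝ) + 1) * Real.Gamma ((n : ℝ) + 1 + ν))) *
    (z / 2) ^ (2 * (n : ℝ) + ν)

/-- The BESQ^{(ν)} transition probability density `p^{(ν)}(t, y | x)`. -/
noncomputable def besqP (ν t y x : ℝ) : ℝ :=
  (1 / (2 * t)) * (y / x) ^ (ν / 2) * Real.exp (-(x + y) / (2 * t)) *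
    besselI ν (Real.sqrt (x * y) / t)

/-- The kernel `q^{(ν)}_t(v, y)`, real form of `p^{(ν)}(−t, −v | y)`. -/
noncomputable def besqQ (ν t v y : ℝ) : ℝ :=
  (1 / (2 * t)) * (v / y) ^ (ν / 2) * Real.exp ((y - v) / (2 * t)) *
    besselJ ν (Real.sqrt (v * y) / t)

open Finset
open scoped Nat

/-!
Both kernels are elementary factors times the entire function
`C_ν(z) = ∑ z ^ n / (n! Γ(n + 1 + ν))`, taken at a positive argument for `p` and a negative one for
`q`, so the equation is an instance of Weber's second exponential integral
`∫₀^∞ y ^ ν e^{-ay} C_ν(βy) C_ν(γy) dy = a ^ (-ν - 1) e^{(β + γ) / a} C_ν(βγ / a²)`, with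
`a = 1 / (2 (t - s)) - 1 / (2 t)`. Integrating the double series on the left term by term produces
the coefficients `Γ(m + n + 1 + ν) / (m! Γ(m + 1 + ν) n! Γ(n + 1 + ν))`, and the Chu–Vandermonde
identity recognizes them as those of the product of the three power series on the right.
-/

/-- The coefficients `1 / (n! Γ(n + 1 + ν))` of the Bessel–Clifford function `besselClifford ν`. -/
noncomputable def besselCliffordCoeff (ν : ℝ) (n : ℕ) : ℝ :=
  (n ! * Real.Gamma (n + 1 + ν))⁻¹

/-- The Bessel–Clifford function `C_ν`, the regularized hypergeometric function `₀F₁(; ν + 1; z)`: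
`I_ν(z)` and `J_ν(z)` are `(z / 2) ^ ν` times its values at `(z / 2) ^ 2` and `-(z / 2) ^ 2`. -/
noncomputable def besselClifford (ν z : ℝ) : ℝ :=
  ∑' n : ℕ, besselCliffordCoeff ν n * z ^ n

lemma Gamma_natCast_add_one_add_pos {ν : ℝ} (hν : -1 < ν) (n : ℕ) :
    0 < Real.Gamma (n + 1 + ν) :=
  Real.Gamma_pos_of_pos (by linarith [n.cast_nonneg (α := ℝ)])

lemma besselCliffordCoeff_pos {ν : ℝ} (hν : -1 < ν) (n : ℕ) : 0 < besselCliffordCoeff ν n := by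
  have := Gamma_natCast_add_one_add_pos hν n
  unfold besselCliffordCoeff
  positivity

lemma summable_besselClifford (ν z : ℝ) :
    Summable fun n : ℕ => besselCliffordCoeff ν n * z ^ n := by
  refine .of_norm_bounded_eventually_nat (Real.summable_pow_div_factorial |z|) ?_
  filter_upwards [Filter.eventually_ge_atTop ⌈1 - ν⌉₊] with n hn
  have two_le : 2 ≤ (n : ℝ) + 1 + ν := by linarith [Nat.ceil_le.mp hn]
  have one_le_Gamma : 1 ≤ Real.Gamma (n + 1 + ν) :=
    Real.Gamma_two.ge.trans
      (Real.Gamma_strictMonoOn_Ici.monotoneOn Set.self_mem_Ici two_le two_le)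
  calc ‖besselCliffordCoeff ν n * z ^ n‖ = |z| ^ n / (n ! * Real.Gamma (n + 1 + ν)) := by
        have : 0 < Real.Gamma (n + 1 + ν) := by linarith
        rw [besselCliffordCoeff, inv_mul_eq_div, norm_div, norm_pow, Real.norm_eq_abs,
          Real.norm_of_nonneg (by positivity)]
    _ ≤ |z| ^ n / n ! := by
        gcongr
        exact le_mul_of_one_le_right (by positivity) one_le_Gamma

lemma hasSum_besselClifford (ν z : ℝ) :
    HasSum (fun n : ℕ => besselCliffordCoeff ν n * z ^ n) (besselClifford ν z) :=
  (summable_besselClifford ν z).hasSum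

lemma besselI_eq_rpow_mul_besselClifford (ν : ℝ) {z : ℝ} (hz : 0 < z) :
    besselI ν z = (z / 2) ^ ν * besselClifford ν ((z / 2) ^ 2) := by
  rw [besselI, besselClifford, ← tsum_mul_left]
  refine tsum_congr fun n => ?_
  rw [besselCliffordCoeff, Real.Gamma_nat_eq_factorial, Real.rpow_add (by positivity),
    Real.rpow_mul (by positivity), Real.rpow_natCast, Real.rpow_two]
  ring

lemma besselJ_eq_rpow_mul_besselClifford (ν : ℝ) {z : ℝ} (hz : 0 < z) :
    besselJ ν z = (z / 2) ^ ν * besselClifford ν (-(z / 2) ^ 2) := by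
  rw [besselJ, besselClifford, ← tsum_mul_left]
  refine tsum_congr fun n => ?_
  rw [besselCliffordCoeff, Real.Gamma_nat_eq_factorial, Real.rpow_add (by positivity),
    Real.rpow_mul (by positivity), Real.rpow_natCast, Real.rpow_two, neg_pow ((z / 2) ^ 2)]
  ring

lemma ascPochhammer_smeval_mul_Gamma {r : ℝ} (hr : 0 < r) (n : ℕ) :
    (ascPochhammer ℕ n).smeval r * Real.Gamma r = Real.Gamma (r + n) := by
  induction n with
  | zero => simp
  | succ n ih =>
    have hrn : r + n ≠ 0 := by positivity
    rw [ascPochhammer_succ_right, Polynomial.smeval_mul, Polynomial.smeval_add, Polynomial.smeval_X,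
      Polynomial.smeval_natCast, Nat.cast_succ, ← add_assoc, Real.Gamma_add_one hrn, ← ih]
    simp only [pow_one, pow_zero, nsmul_one]
    ring

lemma ringChoose_eq_Gamma_div {r : ℝ} {n : ℕ} (h : (n : ℝ) < r + 1) :
    Ring.choose r n = Real.Gamma (r + 1) / (n ! * Real.Gamma (r - n + 1)) := by
  have hpos : 0 < r - n + 1 := by linarith
  have hGamma : Real.Gamma (r - n + 1) ≠ 0 := (Real.Gamma_pos_of_pos hpos).ne'
  rw [eq_div_iff (mul_ne_zero (by positivity) hGamma), ← mul_assoc, mul_comm _ (n ! : ℝ),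
    ← nsmul_eq_mul, Ring.choose, Ring.factorial_nsmul_multichoose_eq_ascPochhammer,
    ascPochhammer_smeval_mul_Gamma hpos]
  ring_nf

lemma choose_mul_ringChoose_eq {ν : ℝ} (hν : -1 < ν) {m n k : ℕ} (hkm : k ≤ m) (hkn : k ≤ n) :
    (m.choose k : ℝ) * Ring.choose (n + ν) (n - k) =
      m ! * Real.Gamma (n + 1 + ν) *
        (besselCliffordCoeff ν k * ((m - k)! : ℝ)⁻¹ * ((n - k)! : ℝ)⁻¹) := by
  rw [ringChoose_eq_Gamma_div (by push_cast [hkn]; linarith [k.cast_nonneg (α := ℝ)]),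
    Nat.cast_choose ℝ hkm,
    besselCliffordCoeff, Nat.cast_sub hkn, show (n + ν - (n - k) + 1 : ℝ) = k + 1 + ν by ring,
    add_right_comm (n : ℝ) ν 1]
  have := (Gamma_natCast_add_one_add_pos hν k).ne'
  field_simp

-- This is the coefficient of `b ^ m * c ^ n` in `exp b * exp c * C_ν(b * c)`; the identity is
-- Chu–Vandermonde for `choose (m + (n + ν)) n`.
lemma sum_besselCliffordCoeff_mul_inv_factorial {ν : ℝ} (hν : -1 < ν) (m n : ℕ) :
    ∑ k ∈ range (min m n + 1),
        besselCliffordCoeff ν k * ((m - k)! : ℝ)⁻¹ * ((n - k)! : ℝ)⁻¹ =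
      Real.Gamma (m + n + 1 + ν) * besselCliffordCoeff ν m * besselCliffordCoeff ν n := by
  have hm := Gamma_natCast_add_one_add_pos hν m
  have hn := Gamma_natCast_add_one_add_pos hν n
  have vandermonde : Ring.choose (m + (n + ν)) n =
      ∑ k ∈ range (min m n + 1), (m.choose k : ℝ) * Ring.choose (n + ν) (n - k) := by
    rw [Ring.add_choose_eq n (Commute.all (m : ℝ) (n + ν)),
      Nat.sum_antidiagonal_eq_sum_range_succ_mk]
    simp only [Ring.choose_natCast]
    refine (sum_subset (range_subset_range.mpr (by omega)) fun k hkn hk => ?_).symm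
    rw [mem_range] at hkn hk
    rw [Nat.choose_eq_zero_of_lt (by omega), Nat.cast_zero, zero_mul]
  have factor : ∑ k ∈ range (min m n + 1), (m.choose k : ℝ) * Ring.choose (n + ν) (n - k) =
      m ! * Real.Gamma (n + 1 + ν) * ∑ k ∈ range (min m n + 1),
        besselCliffordCoeff ν k * ((m - k)! : ℝ)⁻¹ * ((n - k)! : ℝ)⁻¹ := by
    rw [mul_sum]
    refine sum_congr rfl fun k hk => choose_mul_ringChoose_eq hν ?_ ?_ <;>
      · rw [mem_range] at hk
        omega
  have closed_form : Ring.choose (m + (n + ν)) n =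
      Real.Gamma (m + n + 1 + ν) / (n ! * Real.Gamma (m + 1 + ν)) := by
    rw [ringChoose_eq_Gamma_div (by linarith [m.cast_nonneg (α := ℝ)])]
    ring_nf
  rw [factor, closed_form] at vandermonde
  unfold besselCliffordCoeff at vandermonde ⊢
  field_simp at vandermonde ⊢
  linear_combination -vandermonde

lemma hasSum_sum_diagonal {α : Type*} [AddCommMonoid α] [TopologicalSpace α]
    [ContinuousAdd α] [RegularSpace α] {f : ℕ × ℕ × ℕ → α} {a : α} (hf : HasSum f a) :
    HasSum (fun p : ℕ × ℕ => ∑ k ∈ range (min p.1 p.2 + 1), f (k, p.1 - k, p.2 - k)) a := by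
  let shift : ℕ × ℕ × ℕ → (ℕ × ℕ) × ℕ := fun r => ((r.2.1 + r.1, r.2.2 + r.1), r.1)
  have shift_injective : Function.Injective shift := by
    rintro ⟨k, i, j⟩ ⟨k', i', j'⟩ h
    simp only [shift, Prod.mk.injEq] at h ⊢
    omega
  refine ((hasSum_extend_zero shift_injective).mpr hf).prod_fiberwise ?_
  rintro ⟨m, n⟩
  have extend_eq : ∀ k ∈ range (min m n + 1),
      Function.extend shift f 0 ((m, n), k) = f (k, m - k, n - k) := fun k hk => by
    have : shift (k, m - k, n - k) = ((m, n), k) := by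
      simp only [mem_range] at hk
      simp only [shift, Prod.mk.injEq, and_true]
      omega
    rw [← this, shift_injective.extend_apply]
  rw [← sum_congr rfl extend_eq]
  refine hasSum_sum_of_ne_finset_zero fun k hk => Function.extend_apply' _ _ _ ?_
  rintro ⟨⟨k', i, j⟩, h⟩
  simp only [shift, Prod.mk.injEq] at h
  simp only [mem_range] at hk
  omega

lemma hasSum_prod_mul {ι κ : Type*} {f : ι → ℝ} {g : κ → ℝ} {a b : ℝ}
    (hf : HasSum f a) (hg : HasSum g b) : HasSum (fun p : ι × κ => f p.1 * g p.2) (a * b) :=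
  hf.mul hg (summable_mul_of_summable_norm hf.summable.norm hg.summable.norm)

lemma hasSum_pow_div_factorial_exp (x : ℝ) :
    HasSum (fun n : ℕ => x ^ n / n !) (Real.exp x) :=
  Real.exp_eq_exp_ℝ ▸ NormedSpace.expSeries_div_hasSum_exp x

lemma hasSum_Gamma_mul_besselCliffordCoeff {ν : ℝ} (hν : -1 < ν) (b c : ℝ) :
    HasSum (fun p : ℕ × ℕ => Real.Gamma (p.1 + p.2 + 1 + ν) *
        (besselCliffordCoeff ν p.1 * b ^ p.1) * (besselCliffordCoeff ν p.2 * c ^ p.2))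
      (Real.exp (b + c) * besselClifford ν (b * c)) := by
  have triple := hasSum_prod_mul (hasSum_besselClifford ν (b * c))
    (hasSum_prod_mul (hasSum_pow_div_factorial_exp b) (hasSum_pow_div_factorial_exp c))
  rw [Real.exp_add, mul_comm]
  refine (hasSum_sum_diagonal triple).congr_fun ?_
  rintro ⟨m, n⟩
  calc Real.Gamma (m + n + 1 + ν) * (besselCliffordCoeff ν m * b ^ m) *
        (besselCliffordCoeff ν n * c ^ n)
      = b ^ m * c ^ n * ∑ k ∈ range (min m n + 1),
          besselCliffordCoeff ν k * ((m - k)! : ℝ)⁻¹ * ((n - k)! : ℝ)⁻¹ := by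
        rw [sum_besselCliffordCoeff_mul_inv_factorial hν]
        ring
    _ = ∑ k ∈ range (min m n + 1), besselCliffordCoeff ν k * (b * c) ^ k *
          (b ^ (m - k) / (m - k)! * (c ^ (n - k) / (n - k)!)) := by
        rw [mul_sum]
        refine sum_congr rfl fun k hk => ?_
        have hk : k ≤ m ∧ k ≤ n := by
          rw [mem_range] at hk
          omega
        rw [← pow_sub_mul_pow b hk.1, ← pow_sub_mul_pow c hk.2]
        ring

/-- The `(p.1, p.2)` term of the double series obtained by expanding both Bessel–Clifford factors of
`y ^ ν * exp (-(a * y)) * (besselClifford ν (β * y) * besselClifford ν (γ * y))`. -/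
noncomputable def weberTerm (ν a β γ : ℝ) (p : ℕ × ℕ) (y : ℝ) : ℝ :=
  y ^ ν * Real.exp (-(a * y)) *
    (besselCliffordCoeff ν p.1 * (β * y) ^ p.1 * (besselCliffordCoeff ν p.2 * (γ * y) ^ p.2))

lemma tsum_weberTerm (ν a β γ y : ℝ) :
    ∑' p, weberTerm ν a β γ p y =
      y ^ ν * Real.exp (-(a * y)) * (besselClifford ν (β * y) * besselClifford ν (γ * y)) := by
  unfold weberTerm
  rw [tsum_mul_left]
  exact congrArg _ (tsum_mul_tsum_of_summable_norm
    (summable_besselClifford ν (β * y)).norm (summable_besselClifford ν (γ * y)).norm).symm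

lemma weberTerm_eq_mul_rpow_mul_exp (ν a β γ : ℝ) (p : ℕ × ℕ) {y : ℝ} (hy : 0 < y) :
    weberTerm ν a β γ p y =
      besselCliffordCoeff ν p.1 * β ^ p.1 * (besselCliffordCoeff ν p.2 * γ ^ p.2) *
        (y ^ (p.1 + p.2 + 1 + ν - 1) * Real.exp (-(a * y))) := by
  have : y ^ (p.1 + p.2 + 1 + ν - 1) = y ^ ν * y ^ p.1 * y ^ p.2 := by
    rw [← Real.rpow_natCast, ← Real.rpow_natCast, ← Real.rpow_add hy, ← Real.rpow_add hy]
    ring_nf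
  rw [weberTerm, this]
  ring

lemma norm_weberTerm {ν : ℝ} (hν : -1 < ν) (a β γ : ℝ) (p : ℕ × ℕ) {y : ℝ} (hy : 0 < y) :
    ‖weberTerm ν a β γ p y‖ = weberTerm ν a |β| |γ| p y := by
  simp only [weberTerm, norm_mul, norm_pow, Real.norm_eq_abs, Real.abs_exp, abs_of_pos hy,
    abs_of_pos (Real.rpow_pos_of_pos hy ν), abs_of_pos (besselCliffordCoeff_pos hν _)]

lemma integrableOn_weberTerm {ν a : ℝ} (hν : -1 < ν) (ha : 0 < a) (β γ : ℝ)
    (p : ℕ × ℕ) :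
    IntegrableOn (weberTerm ν a β γ p) (Set.Ioi 0) := by
  have hexp : -1 < (p.1 : ℝ) + p.2 + 1 + ν - 1 := by
    linarith [p.1.cast_nonneg (α := ℝ), p.2.cast_nonneg (α := ℝ)]
  have integrableOn_gamma := integrableOn_rpow_mul_exp_neg_mul_rpow hexp one_pos ha
  simp only [Real.rpow_one, neg_mul] at integrableOn_gamma
  exact IntegrableOn.congr_fun (integrableOn_gamma.const_mul _)
    (fun y hy => (weberTerm_eq_mul_rpow_mul_exp ν a β γ p hy).symm) measurableSet_Ioi

lemma integral_weberTerm {ν a : ℝ} (hν : -1 < ν) (ha : 0 < a) (β γ : ℝ)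
    (p : ℕ × ℕ) :
    ∫ y in Set.Ioi (0 : ℝ), weberTerm ν a β γ p y =
      (1 / a) ^ (ν + 1) * (Real.Gamma (p.1 + p.2 + 1 + ν) *
        (besselCliffordCoeff ν p.1 * (β / a) ^ p.1) *
        (besselCliffordCoeff ν p.2 * (γ / a) ^ p.2)) := by
  have hpos : 0 < (p.1 : ℝ) + p.2 + 1 + ν := by
    linarith [p.1.cast_nonneg (α := ℝ), p.2.cast_nonneg (α := ℝ)]
  have hinv : 0 < 1 / a := by positivity
  have hpow : (1 / a) ^ (p.1 + p.2 + 1 + ν) =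
      (1 / a) ^ (ν + 1) * (1 / a) ^ p.1 * (1 / a) ^ p.2 := by
    rw [← Real.rpow_natCast, ← Real.rpow_natCast, ← Real.rpow_add hinv, ← Real.rpow_add hinv]
    ring_nf
  rw [setIntegral_congr_fun measurableSet_Ioi
      fun y hy => weberTerm_eq_mul_rpow_mul_exp ν a β γ p hy,
    integral_const_mul, Real.integral_rpow_mul_exp_neg_mul_Ioi hpos ha, hpow]
  ring

lemma hasSum_integral_weberTerm {ν a : ℝ} (hν : -1 < ν) (ha : 0 < a) (β γ : ℝ) :
    HasSum (fun p => ∫ y in Set.Ioi (0 : ℝ), weberTerm ν a β γ p y)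
      ((1 / a) ^ (ν + 1) *
        (Real.exp (β / a + γ / a) * besselClifford ν (β / a * (γ / a)))) := by
  simp only [integral_weberTerm hν ha]
  exact (hasSum_Gamma_mul_besselCliffordCoeff hν (β / a) (γ / a)).mul_left _

lemma integral_rpow_mul_exp_mul_besselClifford_mul_besselClifford
    {ν a : ℝ} (hν : -1 < ν) (ha : 0 < a) (β γ : ℝ) :
    ∫ y in Set.Ioi (0 : ℝ), y ^ ν * Real.exp (-(a * y)) *
        (besselClifford ν (β * y) * besselClifford ν (γ * y)) =
      (1 / a) ^ (ν + 1) *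
        (Real.exp (β / a + γ / a) * besselClifford ν (β / a * (γ / a))) := by
  have summable_norm : Summable fun p => ∫ y in Set.Ioi (0 : ℝ), ‖weberTerm ν a β γ p y‖ := by
    refine (hasSum_integral_weberTerm hν ha |β| |γ|).summable.congr fun p => ?_
    exact setIntegral_congr_fun measurableSet_Ioi fun y hy => (norm_weberTerm hν a β γ p hy).symm
  have termwise := hasSum_integral_of_summable_integral_norm
    (integrableOn_weberTerm hν ha β γ) summable_norm
  simp only [tsum_weberTerm] at termwise
  exact termwise.unique (hasSum_integral_weberTerm hν ha β γ)

lemma div_rpow_half_mul_sqrt_div_rpow (ν : ℝ) {t v y : ℝ} (ht : 0 < t) (hv : 0 < v) (hy : 0 < y) :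
    (v / y) ^ (ν / 2) * (√(v * y) / t / 2) ^ ν = (v / (2 * t)) ^ ν := by
  have rpow_eq_sq_rpow : ∀ {w : ℝ}, 0 < w → w ^ ν = (w ^ 2) ^ (ν / 2) := fun hw => by
    rw [← Real.rpow_natCast_mul hw.le]
    ring_nf
  rw [rpow_eq_sq_rpow (by positivity : 0 < √(v * y) / t / 2),
    rpow_eq_sq_rpow (by positivity : 0 < v / (2 * t)),
    ← Real.mul_rpow (by positivity) (by positivity), div_pow, div_pow, Real.sq_sqrt (by positivity)]
  congr 1
  field_simp

lemma sqrt_mul_div_div_two_sq {v y : ℝ} (hvy : 0 ≤ v * y) (t : ℝ) :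
    (√(v * y) / t / 2) ^ 2 = v / (4 * t ^ 2) * y := by
  rw [div_pow, div_pow, Real.sq_sqrt hvy]
  ring

lemma besqQ_eq_besselClifford (ν : ℝ) {t v y : ℝ} (ht : 0 < t) (hv : 0 < v) (hy : 0 < y) :
    besqQ ν t v y = 1 / (2 * t) * (v / (2 * t)) ^ ν * Real.exp ((y - v) / (2 * t)) *
      besselClifford ν (-(v / (4 * t ^ 2)) * y) := by
  rw [besqQ, besselJ_eq_rpow_mul_besselClifford _ (by positivity),
    sqrt_mul_div_div_two_sq (by positivity), ← div_rpow_half_mul_sqrt_div_rpow ν ht hv hy, neg_mul]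
  ring

lemma besqP_eq_besselClifford (ν : ℝ) {t y x : ℝ} (ht : 0 < t) (hy : 0 < y) (hx : 0 < x) :
    besqP ν t y x = 1 / (2 * t) * (y / (2 * t)) ^ ν * Real.exp (-(x + y) / (2 * t)) *
      besselClifford ν (x / (4 * t ^ 2) * y) := by
  rw [besqP, besselI_eq_rpow_mul_besselClifford _ (by positivity),
    sqrt_mul_div_div_two_sq (by positivity), ← div_rpow_half_mul_sqrt_div_rpow ν ht hy hx,
    mul_comm y x]
  ring

lemma besqQ_mul_besqP_eq (ν : ℝ) {t τ v x y : ℝ} (ht : 0 < t) (hτ : 0 < τ) (hv : 0 < v)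
    (hx : 0 < x) (hy : 0 < y) :
    besqQ ν t v y * besqP ν τ y x =
      1 / (4 * t * τ) * (v / (4 * t * τ)) ^ ν * Real.exp (-(v / (2 * t) + x / (2 * τ))) *
        (y ^ ν * Real.exp (-((1 / (2 * τ) - 1 / (2 * t)) * y)) *
          (besselClifford ν (-(v / (4 * t ^ 2)) * y) *
            besselClifford ν (x / (4 * τ ^ 2) * y))) := by
  have hpow : (v / (2 * t)) ^ ν * (y / (2 * τ)) ^ ν = (v / (4 * t * τ)) ^ ν * y ^ ν := by
    rw [← Real.mul_rpow (by positivity) (by positivity),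
      ← Real.mul_rpow (by positivity) (by positivity)]
    ring_nf
  have hexp : Real.exp ((y - v) / (2 * t)) * Real.exp (-(x + y) / (2 * τ)) =
      Real.exp (-(v / (2 * t) + x / (2 * τ))) *
        Real.exp (-((1 / (2 * τ) - 1 / (2 * t)) * y)) := by
    rw [← Real.exp_add, ← Real.exp_add]
    ring_nf
  rw [besqQ_eq_besselClifford ν ht hv hy, besqP_eq_besselClifford ν hτ hy hx]
  calc _ = 1 / (4 * t * τ) * ((v / (2 * t)) ^ ν * (y / (2 * τ)) ^ ν) *
        (Real.exp ((y - v) / (2 * t)) * Real.exp (-(x + y) / (2 * τ))) *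
        (besselClifford ν (-(v / (4 * t ^ 2)) * y) * besselClifford ν (x / (4 * τ ^ 2) * y)) := by
        ring
    _ = _ := by
        rw [hpow, hexp]
        ring

lemma besqQ_mul_besqP_prefactor_eq (ν : ℝ) {s t τ v : ℝ} (hs : 0 < s) (ht : 0 < t) (hτ : 0 < τ)
    (hv : 0 ≤ v) :
    1 / (4 * t * τ) * (v / (4 * t * τ)) ^ ν * (1 / (s / (2 * t * τ))) ^ (ν + 1) =
      1 / (2 * s) * (v / (2 * s)) ^ ν := by
  have inv_rescale : 1 / (2 * s) = 1 / (4 * t * τ) * (1 / (s / (2 * t * τ))) := by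
    field_simp
    norm_num
  rw [div_eq_mul_one_div v (2 * s), inv_rescale, ← mul_assoc, ← div_eq_mul_one_div v (4 * t * τ),
    Real.mul_rpow (by positivity) (by positivity), Real.rpow_add_one (by positivity)]
  ring

/-- Negative-time extension of the Chapman–Kolmogorov equation:
`∫₀^∞ q^{(ν)}_t(v,y) p^{(ν)}(t−s, y|x) dy = q^{(ν)}_s(v,x)`. -/
theorem negative_time_chapman_kolmogorov
    (ν : ℝ) (hν : -1 < ν) (s t : ℝ) (hs : 0 < s) (hst : s < t)
    (x v : ℝ) (hx : 0 < x) (hv : 0 < v) :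
    ∫ y in Set.Ioi (0 : ℝ), besqQ ν t v y * besqP ν (t - s) y x = besqQ ν s v x := by
  have ht : 0 < t := hs.trans hst
  have hτ : 0 < t - s := sub_pos.mpr hst
  have rate_eq : 1 / (2 * (t - s)) - 1 / (2 * t) = s / (2 * t * (t - s)) := by
    field_simp
    ring
  have rate_pos : 0 < s / (2 * t * (t - s)) := by positivity
  rw [setIntegral_congr_fun measurableSet_Ioi fun y hy => besqQ_mul_besqP_eq ν ht hτ hv hx hy,
    integral_const_mul, rate_eq,
    integral_rpow_mul_exp_mul_besselClifford_mul_besselClifford hν rate_pos,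
    besqQ_eq_besselClifford ν hs hv hx]
  have exponent_eq : -(v / (2 * t) + x / (2 * (t - s))) +
      (-(v / (4 * t ^ 2)) / (s / (2 * t * (t - s))) +
        x / (4 * (t - s) ^ 2) / (s / (2 * t * (t - s)))) = (x - v) / (2 * s) := by
    field_simp
    ring
  have argument_eq : -(v / (4 * t ^ 2)) / (s / (2 * t * (t - s))) *
      (x / (4 * (t - s) ^ 2) / (s / (2 * t * (t - s)))) = -(v / (4 * s ^ 2)) * x := by
    field_simp
    ring
  rw [argument_eq, ← besqQ_mul_besqP_prefactor_eq ν hs ht hτ hv.le, ← exponent_eq,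
    Real.exp_add (-(_ + _))]
  ring
end

section
/- Let ν > −1 and let j > 0 be a zero of the Bessel function J_ν, i.e. J_ν(j) = 0. Then for every complex number z with z² ≠ j²: ∫₀¹ u · J_ν(zu) · J_ν(ju) du = (j/(j² − z²)) · J_ν(z) · J_{ν+1}(j). -/
open MeasureTheory intervalIntegral

/-- The Bessel function of the first kind `J_ν(z)` for complex `z`
(principal branch of `z^ν`). -/
noncomputable def besselJC (ν : ℝ) (z : ℂ) : ℂ :=
  ∑' n : ℕ, ((-1 : ℂ) ^ n / (Complex.Gamma ((n : ℂ) + 1) * Complex.Gamma ((n : ℂ) + 1 + ν))) *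
    (z / 2) ^ ((2 * (n : ℂ) + ν) : ℂ)

/-!
Write `J_ν(w) = (w / 2) ^ ν * F_{ν+1}(-w² / 4)` with `F_c(x) = ∑ xⁿ / (n! Γ(c + n))`, which is
entire and satisfies `F_c' = F_{c+1}` and `F_c(x) = c F_{c+1}(x) + x F_{c+1}'(x)`. Hence
`f_a(u) = F_c(a u²)` and `g_a(u) = u ^ (2c) F_{c+1}(a u²)` satisfy `f_a' = 2 a u ^ (1 - 2c) g_a` and
`g_a' = 2 u ^ (2c - 1) f_a`, so the Wronskian-type expression `a g_a f_b - b f_a g_b` has derivative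
`2 (a - b) u ^ (2c - 1) f_a f_b`. Integrating over `[0, 1]` gives Lommel's integral, in which one of
the two boundary terms vanishes at a zero of `J_ν`.
-/

open Complex

theorem hasSum_deriv_of_hasFPowerSeriesOnBall {𝕜 F : Type*} [NontriviallyNormedField 𝕜]
    [NormedAddCommGroup F] [NormedSpace 𝕜 F] [CompleteSpace F] {f : 𝕜 → F}
    {p : FormalMultilinearSeries 𝕜 𝕜 F} {x y : 𝕜} {r : ENNReal}
    (hf : HasFPowerSeriesOnBall f p x r) (hy : y ∈ Metric.eball 0 r) :
    HasSum (fun n ↦ y ^ n • (n + 1) • p.coeff (n + 1)) (deriv f (x + y)) := by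
  have hsum := (hf.fderiv.hasSum hy).mapL (ContinuousLinearMap.apply 𝕜 F 1)
  simpa [FormalMultilinearSeries.apply_eq_pow_smul_coeff,
    FormalMultilinearSeries.derivSeries_coeff_one] using hsum

section Hypergeometric

variable {a b : Multiset ℂ}

variable (a b) in
theorem add_one_mul_regularizedHGFunCoeff_add_one (n : ℕ) :
    (n + 1) * regularizedHGFunCoeff a b (n + 1) =
      a.prod * regularizedHGFunCoeff (a.map (· + 1)) (b.map (· + 1)) n := by
  have hn : (n + 1 : ℂ) ≠ 0 := Nat.cast_add_one_ne_zero n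
  have numerator : (a.map (ascPochhammer ℂ (n + 1)).eval).prod =
      a.prod * (a.map fun x ↦ (ascPochhammer ℂ n).eval (x + 1)).prod := by
    simp [ascPochhammer_succ_left, Multiset.prod_map_mul]
  have denominator : (b.map fun x ↦ Gamma (x + (n + 1))).prod =
      (b.map fun x ↦ Gamma (x + 1 + n)).prod := by
    simp only [add_assoc, add_comm (1 : ℂ)]
  simp only [regularizedHGFunCoeff, Multiset.map_map, Function.comp_def, Nat.cast_add_one,
    numerator, denominator, Nat.factorial_succ, Nat.cast_mul]
  rw [mul_assoc, ← mul_div_assoc, mul_div_mul_left _ _ hn, mul_div_assoc]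

theorem hasFPowerSeriesOnBall_regularizedHGFun (h : a.card ≤ b.card) :
    HasFPowerSeriesOnBall (regularizedHGFun a b) (regularizedHGFunSeries a b) 0 ⊤ := by
  have hr := radius_regularizedHGFunSeries_eq_top h
  simpa only [hr] using! (regularizedHGFunSeries a b).hasFPowerSeriesOnBall (by simp [hr])

theorem hasSum_regularizedHGFun (h : a.card ≤ b.card) (z : ℂ) :
    HasSum (fun n ↦ regularizedHGFunCoeff a b n * z ^ n) (regularizedHGFun a b z) := by
  simpa [FormalMultilinearSeries.apply_eq_pow_smul_coeff, mul_comm] using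
    (hasFPowerSeriesOnBall_regularizedHGFun h).hasSum (y := z) (by simp)

theorem hasSum_deriv_regularizedHGFun (h : a.card ≤ b.card) (z : ℂ) :
    HasSum (fun n : ℕ ↦ (n + 1) * regularizedHGFunCoeff a b (n + 1) * z ^ n)
      (deriv (regularizedHGFun a b) z) := by
  simpa [mul_comm] using
    hasSum_deriv_of_hasFPowerSeriesOnBall (hasFPowerSeriesOnBall_regularizedHGFun h) (y := z)
      (by simp)

theorem hasDerivAt_regularizedHGFun (h : a.card ≤ b.card) (z : ℂ) :
    HasDerivAt (regularizedHGFun a b)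
      (a.prod * regularizedHGFun (a.map (· + 1)) (b.map (· + 1)) z) z := by
  have hderiv := hasSum_deriv_regularizedHGFun h z
  simp only [add_one_mul_regularizedHGFunCoeff_add_one, mul_assoc] at hderiv
  rw [← hderiv.unique ((hasSum_regularizedHGFun (by simpa using h) z).mul_left a.prod)]
  exact ((hasFPowerSeriesOnBall_regularizedHGFun h).differentiableOn.differentiableAt
    (by simp)).hasDerivAt

variable (a b) in
theorem regularizedHGFunCoeff_cons (c : ℂ) (n : ℕ) :
    regularizedHGFunCoeff a (c ::ₘ b) n =
      (c + n) * regularizedHGFunCoeff a ((c + 1) ::ₘ b) n := by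
  have hGamma : (Gamma (c + n))⁻¹ = (c + n) * (Gamma (c + 1 + n))⁻¹ := by
    rw [one_div_Gamma_eq_self_mul_one_div_Gamma_add_one, add_right_comm]
  simp only [regularizedHGFunCoeff, Multiset.map_cons, Multiset.prod_cons, div_eq_mul_inv, mul_inv,
    hGamma]
  ring

theorem regularizedHGFun_cons {c : ℂ} (h : a.card ≤ b.card + 1) (z : ℂ) :
    regularizedHGFun a (c ::ₘ b) z =
      c * regularizedHGFun a ((c + 1) ::ₘ b) z +
        z * deriv (regularizedHGFun a ((c + 1) ::ₘ b)) z := by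
  have h' : a.card ≤ ((c + 1) ::ₘ b).card := by simpa using h
  have hF := hasSum_regularizedHGFun h' z
  have hzF' : HasSum (fun n : ℕ ↦ n * (regularizedHGFunCoeff a ((c + 1) ::ₘ b) n * z ^ n))
      (z * deriv (regularizedHGFun a ((c + 1) ::ₘ b)) z) := by
    rw [← hasSum_nat_add_iff' 1]
    convert! (hasSum_deriv_regularizedHGFun h' z).mul_left z using 1
    · funext n
      push_cast
      ring
    · simp
  refine (hasSum_regularizedHGFun (by simpa using h) z).unique ?_
  convert! (hF.mul_left c).add hzF' using 2 with n
  rw [regularizedHGFunCoeff_cons]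
  ring

end Hypergeometric

/-- The regularized confluent hypergeometric limit function `∑ xⁿ / (n! Γ(c + n))`. -/
local notation "₀F₁(" c ")" => regularizedHGFun 0 {c}

theorem hasDerivAt_regularizedHGFun_zero_singleton (c x : ℂ) :
    HasDerivAt ₀F₁(c) (₀F₁(c + 1) x) x := by
  simpa using hasDerivAt_regularizedHGFun (a := 0) (b := {c}) (by simp) x

theorem regularizedHGFun_zero_singleton_eq_add (c x : ℂ) :
    ₀F₁(c) x = c * ₀F₁(c + 1) x + x * ₀F₁(c + 1 + 1) x := by
  rw [← (hasDerivAt_regularizedHGFun_zero_singleton (c + 1) x).deriv]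
  exact regularizedHGFun_cons (a := 0) (b := 0) (by simp) x

theorem hasDerivAt_regularizedHGFun_zero_singleton_mul_sq (c a : ℂ) (u : ℝ) :
    HasDerivAt (fun u : ℝ ↦ ₀F₁(c) (a * u ^ 2)) (2 * a * u * ₀F₁(c + 1) (a * u ^ 2)) u := by
  have hsq : HasDerivAt (fun u : ℝ ↦ a * (u : ℂ) ^ 2) (a * (2 * u)) u := by
    simpa using ((hasDerivAt_pow 2 (u : ℂ)).const_mul a).comp_ofReal
  refine ((hasDerivAt_regularizedHGFun_zero_singleton c _).comp u hsq).congr_deriv ?_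
  ring

@[fun_prop]
theorem continuous_regularizedHGFun_zero_singleton (c : ℂ) : Continuous ₀F₁(c) :=
  continuous_iff_continuousAt.2 fun x ↦
    (hasDerivAt_regularizedHGFun_zero_singleton c x).continuousAt

theorem hasDerivAt_cpow_mul_regularizedHGFun_zero_singleton {c : ℂ} (hc : c ≠ 0) (a : ℂ)
    {u : ℝ} (hu : u ≠ 0) :
    HasDerivAt (fun u : ℝ ↦ (u : ℂ) ^ (2 * c) * ₀F₁(c + 1) (a * u ^ 2))
      (2 * u ^ (2 * c - 1) * ₀F₁(c) (a * u ^ 2)) u := by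
  have hpow : (u : ℂ) ^ (2 * c) = u ^ (2 * c - 1) * u := by
    have hu0 : (u : ℂ) ≠ 0 := by exact_mod_cast hu
    rw [cpow_sub _ _ hu0, cpow_one, div_mul_cancel₀ _ hu0]
  refine ((hasDerivAt_ofReal_cpow_const hu (mul_ne_zero two_ne_zero hc)).mul
    (hasDerivAt_regularizedHGFun_zero_singleton_mul_sq (c + 1) a u)).congr_deriv ?_
  rw [regularizedHGFun_zero_singleton_eq_add c, hpow]
  ring

theorem two_mul_sub_mul_integral_regularizedHGFun_mul_regularizedHGFun {c : ℂ}
    (hc : 0 < c.re) (a b : ℂ) :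
    2 * (a - b) * ∫ u in (0 : ℝ)..1,
        (u : ℂ) ^ (2 * c - 1) * (₀F₁(c) (a * u ^ 2) * ₀F₁(c) (b * u ^ 2)) =
      a * ₀F₁(c + 1) a * ₀F₁(c) b - b * ₀F₁(c) a * ₀F₁(c + 1) b := by
  have hc0 : c ≠ 0 := by
    rintro rfl
    simp at hc
  let W : ℝ → ℂ := fun u ↦
    a * ((u : ℂ) ^ (2 * c) * ₀F₁(c + 1) (a * u ^ 2) * ₀F₁(c) (b * u ^ 2)) -
      b * (₀F₁(c) (a * u ^ 2) * ((u : ℂ) ^ (2 * c) * ₀F₁(c + 1) (b * u ^ 2)))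
  let W' : ℝ → ℂ := fun u ↦
    2 * (a - b) * ((u : ℂ) ^ (2 * c - 1) * (₀F₁(c) (a * u ^ 2) * ₀F₁(c) (b * u ^ 2)))
  have hW_cont : Continuous W := by
    have : Continuous fun u : ℝ ↦ (u : ℂ) ^ (2 * c) :=
      continuous_ofReal_cpow_const (by simpa using hc)
    fun_prop
  have hW_deriv : ∀ u ∈ Set.Ioo (0 : ℝ) 1, HasDerivAt W (W' u) u := by
    intro u hu
    have hF (x : ℂ) := hasDerivAt_regularizedHGFun_zero_singleton_mul_sq c x u
    have hG (x : ℂ) := hasDerivAt_cpow_mul_regularizedHGFun_zero_singleton hc0 x hu.1.ne'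
    refine ((((hG a).mul (hF b)).const_mul a).sub (((hF a).mul (hG b)).const_mul b)).congr_deriv ?_
    ring
  have hW'_int : IntervalIntegrable W' volume 0 1 := by
    refine ((intervalIntegrable_cpow' ?_).mul_continuousOn (Continuous.continuousOn ?_)).const_mul _
    · simpa using hc
    · fun_prop
  have hFTC := integral_eq_sub_of_hasDerivAt_of_le zero_le_one hW_cont.continuousOn hW_deriv hW'_int
  rw [← intervalIntegral.integral_const_mul, hFTC]
  simp [W, hc0, mul_assoc]

theorem mul_ofReal_cpow (z : ℂ) {u : ℝ} (hu : 0 < u) (s : ℂ) :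
    (z * u) ^ s = z ^ s * (u : ℂ) ^ s := by
  have hu0 : (u : ℂ) ≠ 0 := by exact_mod_cast hu.ne'
  rcases eq_or_ne z 0 with rfl | hz
  · rcases eq_or_ne s 0 with rfl | hs <;> simp [*]
  · rw [mul_comm z, cpow_def_of_ne_zero (mul_ne_zero hu0 hz), cpow_def_of_ne_zero hu0,
      cpow_def_of_ne_zero hz, log_ofReal_mul hu hz, ← exp_add, ofReal_log hu.le]
    ring_nf

theorem mul_cpow_add_one (x s : ℂ) : x * x ^ (s + 1) = x ^ 2 * x ^ s := by
  rcases eq_or_ne x 0 with rfl | hx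
  · simp
  · rw [cpow_add _ _ hx, cpow_one]
    ring

/-- The factor `1 / Γ` is needed only at `x = 0`: it vanishes when `2n + s = 0` with `n > 0`, where
`0 ^ (2n + s) = 1`. -/
theorem inv_Gamma_mul_cpow_two_mul_add (x s : ℂ) (n : ℕ) :
    (Gamma (n + 1 + s))⁻¹ * x ^ (2 * n + s) = (Gamma (n + 1 + s))⁻¹ * (x ^ s * (x ^ 2) ^ n) := by
  rcases eq_or_ne x 0 with rfl | hx
  · rcases n with _ | n
    · simp
    rcases eq_or_ne (2 * ((n + 1 : ℕ) : ℂ) + s) 0 with h0 | h0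
    · have hpole : ((n + 1 : ℕ) : ℂ) + 1 + s = -n := by
        push_cast at h0 ⊢
        linear_combination h0
      rw [hpole, Gamma_neg_nat_eq_zero, inv_zero, zero_mul, zero_mul]
    · rw [zero_cpow h0, zero_pow two_ne_zero, zero_pow n.succ_ne_zero, mul_zero (0 ^ s)]
  · rw [cpow_add _ _ hx, mul_comm 2, cpow_nat_mul, cpow_two, mul_comm (x ^ s)]

theorem besselJC_eq_cpow_mul_regularizedHGFun (ν : ℝ) (w : ℂ) :
    besselJC ν w = (w / 2) ^ (ν : ℂ) * ₀F₁((ν : ℂ) + 1) (-(w ^ 2 / 4)) := by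
  rw [← (hasSum_regularizedHGFun (by simp) _).tsum_eq, ← tsum_mul_left]
  refine tsum_congr fun n ↦ ?_
  have hcoeff : regularizedHGFunCoeff 0 {(ν : ℂ) + 1} n =
      (n.factorial : ℂ)⁻¹ * (Gamma (n + 1 + ν))⁻¹ := by
    simp [regularizedHGFunCoeff, mul_comm, add_comm, add_left_comm]
  rw [hcoeff, Gamma_nat_eq_factorial, div_mul_eq_div_div, div_eq_mul_inv _ (Gamma _), mul_assoc,
    inv_Gamma_mul_cpow_two_mul_add, show -(w ^ 2 / 4) = -1 * (w / 2) ^ 2 by ring, mul_pow (-1)]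
  ring

theorem besselJC_mul_ofReal (ν : ℝ) (w : ℂ) {u : ℝ} (hu : 0 < u) :
    besselJC ν (w * u) =
      (w / 2) ^ (ν : ℂ) * (u : ℂ) ^ (ν : ℂ) * ₀F₁((ν : ℂ) + 1) (-(w ^ 2 / 4) * u ^ 2) := by
  rw [besselJC_eq_cpow_mul_regularizedHGFun, mul_div_right_comm, mul_ofReal_cpow _ hu]
  ring_nf

theorem mul_besselJC_add_one (ν : ℝ) (w : ℂ) :
    w * besselJC (ν + 1) w =
      w ^ 2 / 2 * (w / 2) ^ (ν : ℂ) * ₀F₁((ν : ℂ) + 1 + 1) (-(w ^ 2 / 4)) := by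
  rw [besselJC_eq_cpow_mul_regularizedHGFun, ofReal_add, ofReal_one]
  linear_combination (2 * ₀F₁((ν : ℂ) + 1 + 1) (-(w ^ 2 / 4))) * mul_cpow_add_one (w / 2) ν

theorem sq_sub_sq_mul_integral_mul_besselJC_mul_besselJC {ν : ℝ} (hν : -1 < ν) (a b : ℂ) :
    (b ^ 2 - a ^ 2) * ∫ u in (0 : ℝ)..1, (u : ℂ) * besselJC ν (a * u) * besselJC ν (b * u) =
      b * besselJC ν a * besselJC (ν + 1) b - a * besselJC (ν + 1) a * besselJC ν b := by
  let A : ℂ := -(a ^ 2 / 4)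
  let B : ℂ := -(b ^ 2 / 4)
  have hint : ∫ u in (0 : ℝ)..1, (u : ℂ) * besselJC ν (a * u) * besselJC ν (b * u) =
      (a / 2) ^ (ν : ℂ) * (b / 2) ^ (ν : ℂ) * ∫ u in (0 : ℝ)..1, (u : ℂ) ^ (2 * (ν + 1 : ℂ) - 1) *
        (₀F₁((ν : ℂ) + 1) (A * u ^ 2) * ₀F₁((ν : ℂ) + 1) (B * u ^ 2)) := by
    rw [← intervalIntegral.integral_const_mul]
    refine integral_congr_ae (.of_forall fun u hu ↦ ?_)
    have hu : 0 < u := (Set.uIoc_of_le (zero_le_one' ℝ) ▸ hu).1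
    have hu0 : (u : ℂ) ≠ 0 := by exact_mod_cast hu.ne'
    have hpow : (u : ℂ) ^ (2 * (ν + 1 : ℂ) - 1) = u * u ^ (ν : ℂ) * u ^ (ν : ℂ) := by
      rw [show 2 * (ν + 1 : ℂ) - 1 = 1 + ν + ν by ring, cpow_add _ _ hu0, cpow_add _ _ hu0,
        cpow_one]
    rw [besselJC_mul_ofReal ν a hu, besselJC_mul_ofReal ν b hu, hpow]
    ring
  have hF := two_mul_sub_mul_integral_regularizedHGFun_mul_regularizedHGFun
    (c := ν + 1) (by simpa [← neg_lt_iff_pos_add] using hν) A B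
  rw [hint, mul_right_comm b, mul_besselJC_add_one, mul_besselJC_add_one,
    besselJC_eq_cpow_mul_regularizedHGFun ν a, besselJC_eq_cpow_mul_regularizedHGFun ν b]
  linear_combination 2 * (a / 2) ^ (ν : ℂ) * (b / 2) ^ (ν : ℂ) * hF

theorem bessel_zero_integral_general {ν : ℝ} (hν : -1 < ν) {j : ℂ} (hj : besselJC ν j = 0)
    {z : ℂ} (hz : z ^ 2 ≠ j ^ 2) :
    ∫ u in (0 : ℝ)..1, (u : ℂ) * besselJC ν (z * u) * besselJC ν (j * u) =
      j / (j ^ 2 - z ^ 2) * besselJC ν z * besselJC (ν + 1) j := by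
  have lommel := sq_sub_sq_mul_integral_mul_besselJC_mul_besselJC hν z j
  rw [hj, mul_zero, sub_zero, mul_comm, ← eq_div_iff (sub_ne_zero.2 hz.symm)] at lommel
  rw [lommel]
  ring

/-- If `j > 0` is a zero of `J_ν`, then for every complex `z` with `z² ≠ j²`:
`∫₀¹ u J_ν(zu) J_ν(ju) du = (j/(j² − z²)) J_ν(z) J_{ν+1}(j)`. -/
theorem bessel_zero_integral
    (ν : ℝ) (hν : -1 < ν) (j : ℝ) (hj : 0 < j) (hjz : besselJC ν (j : ℂ) = 0)
    (z : ℂ) (hz : z ^ 2 ≠ (j : ℂ) ^ 2) :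
    ∫ u in (0 : ℝ)..1, (u : ℂ) * besselJC ν (z * (u : ℂ)) * besselJC ν ((j : ℂ) * (u : ℂ))
      = ((j : ℂ) / ((j : ℂ) ^ 2 - z ^ 2)) * besselJC ν z * besselJC (ν + 1) (j : ℂ) := by
  exact bessel_zero_integral_general hν hjz hz
end

section
/- Let ν > −1, N ≥ 0, and let a₁, …, a_N be distinct positive reals. Define, for y > 0, P(y) = ∫₀^∞ (1/2) (u/y)^{ν/2} J_ν(√(uy)) e^{(y−u)/2} ∏_{k=1}^N (−u − a_k) du. Then (a) P coincides on (0, ∞) with a monic polynomial of degree N, and (b) for each j ∈ {1, …, N}: ∫₀^∞ P(y) · (1/2) (y/a_j)^{ν/2} I_ν(√(a_j y)) e^{−(a_j+y)/2} dy = 0. -/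
open MeasureTheory Real

/-- Type-II multiple orthogonal polynomial `P` associated with the modified Bessel
weight, in the real form of its integral representation. -/
noncomputable def typeIIP (ν : ℝ) {N : ℕ} (a : Fin N → ℝ) (y : ℝ) : ℝ :=
  ∫ u in Set.Ioi (0 : ℝ),
    (1 / 2) * (u / y) ^ (ν / 2) * besselJ ν (Real.sqrt (u * y)) * Real.exp ((y - u) / 2) *
      ∏ k : Fin N, (-u - a k)

/-!
For `x` of either sign let `K x` be the function on `(0, ∞)` obtained from the weight
`u ^ ν * exp (-u / 2)` and the everywhere convergent series that `I_ν (√(x u))` and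
`J_ν (√(-x u))` have in common. For `x > 0` it is the orthogonality weight at `x`, and at `x = -y`
it is the kernel of the integral defining `P y`.

Integrating the series termwise, `∫ K x u * p u du` is the value at `x` of `T 1 p`, where `T r` is
the translation `p ↦ p (X + r)` conjugated by the diagonal operator
`X ^ k ↦ 2 ^ k Γ(ν + k + 1) X ^ k`; the coefficients match by the Chu–Vandermonde identity. The
`T r` form a one-parameter group that preserves degree and leading coefficient, and the reflection
`X ↦ -X` exchanges `T r` with `T (-r)`. With `B = ∏ k, (X - a k)` this gives `P = T (-1) B`, which
is monic, and integrating `P` against the weight at `x` gives `T 1 (T (-1) B) x = B x`, which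
vanishes at every `a j`.
-/

open Polynomial Finset
open scoped Nat

section ConjTaylor

/-- The diagonal operator `X ^ k ↦ g k * X ^ k` on polynomials. -/
noncomputable def coeffMul {R : Type*} [CommSemiring R] (g : ℕ → R) : R[X] →ₗ[R] R[X] :=
  lsum fun k => g k • monomial k

@[simp]
theorem coeff_coeffMul {R : Type*} [CommSemiring R] (g : ℕ → R) (p : R[X]) (k : ℕ) :
    (coeffMul g p).coeff k = g k * p.coeff k := by
  induction p using Polynomial.induction_on' with
  | add p q hp hq => rw [map_add, coeff_add, hp, hq, coeff_add, mul_add]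
  | monomial n c => simp +contextual [coeffMul, lsum_apply, coeff_monomial]

theorem coeffMul_comp_neg_X {R : Type*} [CommRing R] (g : ℕ → R) (p : R[X]) :
    coeffMul g (p.comp (-X)) = (coeffMul g p).comp (-X) := by
  have neg_X_eq : (-X : R[X]) = C (-1) * X := by simp
  ext k
  simp only [neg_X_eq, coeff_coeffMul, comp_C_mul_X_coeff, mul_assoc]

theorem taylor_comp_neg_X {R : Type*} [CommRing R] (r : R) (p : R[X]) :
    taylor r (p.comp (-X)) = (taylor (-r) p).comp (-X) := by
  simp [taylor_apply, comp_assoc, add_comm]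

variable {K : Type*} [Field K] {g : ℕ → K}

theorem coeffMul_coeffMul_inv (hg : ∀ k, g k ≠ 0) (p : K[X]) :
    coeffMul g (coeffMul g⁻¹ p) = p := by
  ext k
  simp [hg k]

theorem coeffMul_inv_coeffMul (hg : ∀ k, g k ≠ 0) (p : K[X]) :
    coeffMul g⁻¹ (coeffMul g p) = p := by
  ext k
  simp [hg k]

theorem natDegree_coeffMul (hg : ∀ k, g k ≠ 0) (p : K[X]) :
    (coeffMul g p).natDegree = p.natDegree := by
  have support_eq : (coeffMul g p).support = p.support := by
    ext k
    simp [hg k]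
  simp only [natDegree, degree, support_eq]

/-- Translation by `r` on polynomials, conjugated by the diagonal operator `coeffMul g`. For `g`
without zeros these operators form a one-parameter group in `r`. -/
noncomputable def conjTaylor (g : ℕ → K) (r : K) : K[X] →ₗ[K] K[X] :=
  coeffMul g⁻¹ ∘ₗ taylor r ∘ₗ coeffMul g

theorem conjTaylor_conjTaylor (hg : ∀ k, g k ≠ 0) (r s : K) (p : K[X]) :
    conjTaylor g r (conjTaylor g s p) = conjTaylor g (r + s) p := by
  simp only [conjTaylor, LinearMap.comp_apply, coeffMul_coeffMul_inv hg, taylor_taylor]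

theorem conjTaylor_zero (hg : ∀ k, g k ≠ 0) (p : K[X]) : conjTaylor g 0 p = p := by
  simp only [conjTaylor, LinearMap.comp_apply, taylor_zero, coeffMul_inv_coeffMul hg]

theorem conjTaylor_comp_neg_X (g : ℕ → K) (r : K) (p : K[X]) :
    conjTaylor g r (p.comp (-X)) = (conjTaylor g (-r) p).comp (-X) := by
  simp only [conjTaylor, LinearMap.comp_apply, coeffMul_comp_neg_X, taylor_comp_neg_X]

theorem natDegree_conjTaylor (hg : ∀ k, g k ≠ 0) (r : K) (p : K[X]) :
    (conjTaylor g r p).natDegree = p.natDegree := by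
  have hg_inv : ∀ k, g⁻¹ k ≠ 0 := fun k => inv_ne_zero (hg k)
  simp only [conjTaylor, LinearMap.comp_apply, natDegree_coeffMul hg_inv, natDegree_taylor,
    natDegree_coeffMul hg]

theorem leadingCoeff_conjTaylor (hg : ∀ k, g k ≠ 0) (r : K) (p : K[X]) :
    (conjTaylor g r p).leadingCoeff = p.leadingCoeff := by
  have coeff_taylor_top :
      (taylor r (coeffMul g p)).coeff p.natDegree = g p.natDegree * p.leadingCoeff := by
    rw [← natDegree_coeffMul hg p, coeff_taylor_natDegree, leadingCoeff, natDegree_coeffMul hg,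
      coeff_coeffMul, leadingCoeff]
  rw [leadingCoeff, natDegree_conjTaylor hg, conjTaylor, LinearMap.comp_apply,
    LinearMap.comp_apply, coeff_coeffMul, coeff_taylor_top, Pi.inv_apply,
    inv_mul_cancel_left₀ (hg _)]

theorem eval_conjTaylor_X_pow (g : ℕ → K) (r : K) (m : ℕ) (x : K) :
    (conjTaylor g r (X ^ m)).eval x =
      ∑ k ∈ range (m + 1), m.choose k * (g m / g k) * r ^ (m - k) * x ^ k := by
  have coeffMul_X_pow : coeffMul g (X ^ m) = C (g m) * X ^ m := by
    ext k
    by_cases h : k = m <;> simp [coeff_X_pow, h]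
  have coeff_eq (k : ℕ) : (conjTaylor g r (X ^ m)).coeff k =
      m.choose k * (g m / g k) * r ^ (m - k) := by
    simp only [conjTaylor, LinearMap.comp_apply, coeffMul_X_pow, taylor_mul, taylor_C,
      taylor_X_pow, coeff_coeffMul, coeff_C_mul, coeff_X_add_C_pow, Pi.inv_apply]
    ring
  have natDegree_lt : (conjTaylor g r (X ^ m)).natDegree < m + 1 := by
    rw [Nat.lt_succ_iff, natDegree_le_iff_coeff_eq_zero]
    intro k hk
    rw [coeff_eq, Nat.choose_eq_zero_of_lt hk, Nat.cast_zero, zero_mul, zero_mul]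
  simp only [eval_eq_sum_range' natDegree_lt, coeff_eq]

end ConjTaylor

section Series

theorem integrable_tsum_of_summable_integral_norm {α E ι : Type*} [MeasurableSpace α]
    {μ : Measure α} [NormedAddCommGroup E] [CompleteSpace E] [Countable ι] {F : ι → α → E}
    (hF : ∀ i, Integrable (F i) μ) (hF_sum : Summable fun i => ∫ a, ‖F i a‖ ∂μ) :
    Integrable (fun a => ∑' i, F i a) μ := by
  have summable_toL1 : ∑' i, ‖(hF i).toL1 (F i)‖ₑ ≠ ⊤ := by
    simpa only [tsum_enorm_ne_top_iff_summable_norm, L1.norm_of_fun_eq_integral_norm] using hF_sum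
  refine (L1.integrable_coeFn (∑' i, (hF i).toL1 (F i))).congr ?_
  filter_upwards [Lp.coeFn_tsum summable_toL1, ae_all_iff.2 fun i => (hF i).coeFn_toL1]
    with a tsum_eq toL1_eq
  simp only [tsum_eq, toL1_eq]

theorem hasSum_pow_div_factorial_mul_descFactorial (x : ℝ) (k : ℕ) :
    HasSum (fun n : ℕ => x ^ n / n ! * n.descFactorial k) (x ^ k * exp x) := by
  rw [← hasSum_nat_add_iff' k, sum_eq_zero fun i hi => by
    rw [Nat.descFactorial_of_lt (mem_range.1 hi), Nat.cast_zero, mul_zero], sub_zero, exp_eq_exp_ℝ]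
  refine ((NormedSpace.expSeries_div_hasSum_exp x).mul_left (x ^ k)).congr_fun fun n => ?_
  have factorial_eq : ((n + k)! : ℝ) = n ! * (n + k).descFactorial k := by
    rw [← Nat.factorial_mul_descFactorial (Nat.le_add_left k n), Nat.add_sub_cancel, Nat.cast_mul]
  have descFactorial_ne_zero : ((n + k).descFactorial k : ℝ) ≠ 0 := by
    simp
  rw [factorial_eq, pow_add]
  field_simp

end Series

section Gamma

variable {s : ℝ}

theorem Gamma_add_natCast_div_Gamma (hs : ∀ k : ℕ, s ≠ -k) (m : ℕ) :
    Gamma (s + m) / Gamma s = (ascPochhammer ℝ m).eval s := by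
  rw [div_eq_iff (Gamma_ne_zero hs)]
  induction m with
  | zero => simp
  | succ m ih =>
    rw [Nat.cast_succ, ← add_assoc, Gamma_add_one (fun h => hs m (eq_neg_of_add_eq_zero_left h)),
      ih, ascPochhammer_succ_eval]
    ring

theorem Gamma_add_natCast_div_Gamma_eq_sum_descFactorial (hs : ∀ k : ℕ, s ≠ -k) (n m : ℕ) :
    Gamma (s + n + m) / Gamma (s + n) =
      ∑ k ∈ range (m + 1), m.choose k * (Gamma (s + m) / Gamma (s + k)) * n.descFactorial k := by
  have hs_add (i k : ℕ) : s + i ≠ -k := fun h => hs (i + k) (by push_cast; linarith)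
  have Gamma_ratio (i j : ℕ) :
      Gamma (s + i + j) / Gamma (s + i) = (descPochhammer ℤ j).smeval (s + i + j - 1) := by
    rw [Gamma_add_natCast_div_Gamma (hs_add i), descPochhammer_smeval_eq_ascPochhammer,
      ascPochhammer_smeval_eq_eval, sub_right_comm, add_sub_cancel_right, sub_add_cancel]
  rw [Gamma_ratio, show s + n + m - 1 = n + (s + m - 1) by ring,
    Ring.descPochhammer_smeval_add m (Commute.all _ _),
    Nat.sum_antidiagonal_eq_sum_range_succ_mk]
  refine sum_congr rfl fun k hk => ?_
  have shift : s + m = s + k + (m - k : ℕ) := by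
    rw [add_assoc, ← Nat.cast_add, Nat.add_sub_cancel' (Nat.lt_succ_iff.1 (mem_range.1 hk))]
  rw [descPochhammer_smeval_eq_descFactorial, shift, Gamma_ratio]
  ring

end Gamma

section BesselKernel

variable {ν : ℝ}

/-- The density `(1 / 2) * (u / 2) ^ ν * exp (-u / 2)` on `(0, ∞)` of the gamma distribution with
shape `ν + 1` and scale `2`, without its normalizing factor `1 / Γ(ν + 1)`. -/
noncomputable def gammaWeight (ν u : ℝ) : ℝ :=
  (1 / 2) * (u / 2) ^ ν * exp (-u / 2)

/-- The `m`-th moment of `gammaWeight ν`. -/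
noncomputable def gammaMoment (ν : ℝ) (m : ℕ) : ℝ :=
  2 ^ m * Gamma (ν + 1 + m)

theorem gammaMoment_pos (hν : -1 < ν) (m : ℕ) : 0 < gammaMoment ν m :=
  mul_pos (by positivity) (Gamma_pos_of_pos (by have := m.cast_nonneg (α := ℝ); linarith))

theorem gammaWeight_mul_pow (m : ℕ) {u : ℝ} (hu : 0 < u) :
    gammaWeight ν u * u ^ m =
      (1 / 2) * (1 / 2) ^ ν * (u ^ (ν + 1 + m - 1) * exp (-(1 / 2 * u))) := by
  rw [gammaWeight, div_eq_mul_one_div u 2, mul_rpow hu.le (by norm_num),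
    show ν + 1 + m - 1 = ν + m by ring, rpow_add hu, rpow_natCast,
    show -u / 2 = -(1 / 2 * u) by ring]
  ring

theorem integral_gammaWeight_mul_pow (hν : -1 < ν) (m : ℕ) :
    ∫ u in Set.Ioi 0, gammaWeight ν u * u ^ m = gammaMoment ν m := by
  have shape_pos : 0 < ν + 1 + m := by have := m.cast_nonneg (α := ℝ); linarith
  rw [setIntegral_congr_fun measurableSet_Ioi fun u hu => gammaWeight_mul_pow m hu,
    integral_const_mul, integral_rpow_mul_exp_neg_mul_Ioi shape_pos one_half_pos, gammaMoment,
    one_div_one_div, rpow_add two_pos, rpow_add two_pos, rpow_one, rpow_natCast,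
    div_rpow zero_le_one two_pos.le, one_rpow]
  field_simp

theorem integrableOn_gammaWeight_mul_pow (hν : -1 < ν) (m : ℕ) :
    IntegrableOn (fun u => gammaWeight ν u * u ^ m) (Set.Ioi 0) :=
  .of_integral_ne_zero (integral_gammaWeight_mul_pow hν m ▸ (gammaMoment_pos hν m).ne')

theorem gammaMoment_add_div_gammaMoment (hν : -1 < ν) (n m : ℕ) :
    gammaMoment ν (n + m) / gammaMoment ν n =
      ∑ k ∈ range (m + 1),
        m.choose k * (gammaMoment ν m / gammaMoment ν k) * 2 ^ k * n.descFactorial k := by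
  have not_pole (k : ℕ) : ν + 1 ≠ -k := by have := k.cast_nonneg (α := ℝ); linarith
  calc gammaMoment ν (n + m) / gammaMoment ν n
      = 2 ^ m * (Gamma (ν + 1 + n + m) / Gamma (ν + 1 + n)) := by
        rw [gammaMoment, gammaMoment, Nat.cast_add, ← add_assoc, pow_add]
        field_simp
    _ = _ := by
        rw [Gamma_add_natCast_div_Gamma_eq_sum_descFactorial not_pole, mul_sum]
        refine sum_congr rfl fun k _ => ?_
        rw [gammaMoment, gammaMoment]
        field_simp

theorem hasSum_gammaMoment_ratio (hν : -1 < ν) (m : ℕ) (x : ℝ) :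
    HasSum (fun n : ℕ => (x / 2) ^ n / n ! * (gammaMoment ν (n + m) / gammaMoment ν n))
      (exp (x / 2) * (conjTaylor (gammaMoment ν) 1 (X ^ m)).eval x) := by
  have sum_eq := hasSum_sum (s := range (m + 1)) fun k _ =>
    (hasSum_pow_div_factorial_mul_descFactorial (x / 2) k).mul_left
      (m.choose k * (gammaMoment ν m / gammaMoment ν k) * 2 ^ k)
  convert! sum_eq using 1
  · ext n
    rw [gammaMoment_add_div_gammaMoment hν, mul_sum]
    exact sum_congr rfl fun k _ => by ring
  · rw [eval_conjTaylor_X_pow, mul_sum]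
    refine sum_congr rfl fun k _ => ?_
    rw [one_pow, div_pow]
    field_simp

/-- The transition density at time `1` from `x` to `u` of the squared Bessel process of index `ν`,
continued analytically to negative `x`: for `x > 0` it is the weight
`(1 / 2) * (u / x) ^ (ν / 2) * I_ν (√(x u)) * exp (-(x + u) / 2)`, and for `x < 0` the factor
`(u / x) ^ (ν / 2) * I_ν (√(x u))` becomes `(u / -x) ^ (ν / 2) * J_ν (√(-x u))`. -/
noncomputable def besselKernel (ν x u : ℝ) : ℝ :=
  exp (-x / 2) * gammaWeight ν u * ∑' n : ℕ, (x * u / 2) ^ n / (n ! * gammaMoment ν n)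

/-- The `n`-th term of the series for `besselKernel ν x u * u ^ m`. -/
noncomputable def besselKernelTerm (ν x : ℝ) (m n : ℕ) (u : ℝ) : ℝ :=
  exp (-x / 2) * ((x / 2) ^ n / n !) / gammaMoment ν n * (gammaWeight ν u * u ^ (n + m))

theorem besselKernel_mul_pow (x u : ℝ) (m : ℕ) :
    besselKernel ν x u * u ^ m = ∑' n, besselKernelTerm ν x m n u := by
  rw [besselKernel, ← tsum_mul_left, ← tsum_mul_right]
  refine tsum_congr fun n => ?_
  rw [besselKernelTerm, mul_div_right_comm, mul_pow, pow_add]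
  ring

theorem integrableOn_besselKernelTerm (hν : -1 < ν) (x : ℝ) (m n : ℕ) :
    IntegrableOn (besselKernelTerm ν x m n) (Set.Ioi 0) :=
  (integrableOn_gammaWeight_mul_pow hν (n + m)).const_mul _

theorem integral_besselKernelTerm (hν : -1 < ν) (x : ℝ) (m n : ℕ) :
    ∫ u in Set.Ioi 0, besselKernelTerm ν x m n u =
      exp (-x / 2) * ((x / 2) ^ n / n ! * (gammaMoment ν (n + m) / gammaMoment ν n)) := by
  simp only [besselKernelTerm, integral_const_mul, integral_gammaWeight_mul_pow hν]
  ring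

theorem norm_besselKernelTerm (hν : -1 < ν) (x : ℝ) (m n : ℕ) {u : ℝ} (hu : 0 < u) :
    ‖besselKernelTerm ν x m n u‖ =
      exp (-x / 2) * exp (|x| / 2) * besselKernelTerm ν |x| m n u := by
  have weight_nonneg : 0 ≤ gammaWeight ν u := by unfold gammaWeight; positivity
  have moment_pos := gammaMoment_pos hν n
  simp only [besselKernelTerm, norm_mul, norm_div, norm_pow, norm_eq_abs, abs_exp, Nat.abs_cast,
    Nat.abs_ofNat, abs_of_pos moment_pos, abs_of_nonneg weight_nonneg, abs_of_pos hu, neg_div,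
    exp_neg (|x| / 2)]
  field_simp

theorem summable_integral_norm_besselKernelTerm (hν : -1 < ν) (x : ℝ) (m : ℕ) :
    Summable fun n => ∫ u in Set.Ioi 0, ‖besselKernelTerm ν x m n u‖ := by
  refine (((hasSum_gammaMoment_ratio hν m |x|).summable.mul_left (exp (-|x| / 2))).mul_left
    (exp (-x / 2) * exp (|x| / 2))).congr fun n => ?_
  rw [setIntegral_congr_fun measurableSet_Ioi fun u hu => norm_besselKernelTerm hν x m n hu,
    integral_const_mul, integral_besselKernelTerm hν]

theorem integrableOn_besselKernel_mul_pow (hν : -1 < ν) (x : ℝ) (m : ℕ) :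
    IntegrableOn (fun u => besselKernel ν x u * u ^ m) (Set.Ioi 0) := by
  simp only [besselKernel_mul_pow]
  exact integrable_tsum_of_summable_integral_norm (integrableOn_besselKernelTerm hν x m)
    (summable_integral_norm_besselKernelTerm hν x m)

theorem integral_besselKernel_mul_pow (hν : -1 < ν) (x : ℝ) (m : ℕ) :
    ∫ u in Set.Ioi 0, besselKernel ν x u * u ^ m =
      (conjTaylor (gammaMoment ν) 1 (X ^ m)).eval x := by
  have termwise := hasSum_integral_of_summable_integral_norm
    (integrableOn_besselKernelTerm hν x m) (summable_integral_norm_besselKernelTerm hν x m)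
  simp only [integral_besselKernelTerm hν, ← besselKernel_mul_pow] at termwise
  rw [termwise.unique ((hasSum_gammaMoment_ratio hν m x).mul_left _), neg_div, exp_neg,
    inv_mul_cancel_left₀ (exp_ne_zero _)]

theorem integral_besselKernel_mul_eval (hν : -1 < ν) (x : ℝ) (p : ℝ[X]) :
    ∫ u in Set.Ioi 0, besselKernel ν x u * p.eval u =
      (conjTaylor (gammaMoment ν) 1 p).eval x := by
  calc ∫ u in Set.Ioi 0, besselKernel ν x u * p.eval u
      = ∫ u in Set.Ioi 0, ∑ m ∈ range (p.natDegree + 1),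
          p.coeff m * (besselKernel ν x u * u ^ m) := by
        simp only [eval_eq_sum_range, mul_sum, mul_left_comm]
    _ = ∑ m ∈ range (p.natDegree + 1),
          p.coeff m * (conjTaylor (gammaMoment ν) 1 (X ^ m)).eval x := by
        rw [integral_finsetSum _ fun m _ => (integrableOn_besselKernel_mul_pow hν x m).const_mul _]
        simp only [integral_const_mul, integral_besselKernel_mul_pow hν]
    _ = (conjTaylor (gammaMoment ν) 1 p).eval x := by
        conv_rhs => rw [p.as_sum_range_C_mul_X_pow]
        simp only [← smul_eq_C_mul, map_sum, map_smul, eval_finsetSum, eval_smul, smul_eq_mul]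

end BesselKernel

section Bessel

variable (ν : ℝ) {x u y : ℝ}

theorem div_rpow_mul_sqrt_rpow (n : ℕ) (hu : 0 < u) (hx : 0 < x) :
    (u / x) ^ (ν / 2) * (√(x * u) / 2) ^ (2 * n + ν) = (u / 2) ^ ν * (x * u / 4) ^ n := by
  have sqrt_half_pos : 0 < √(x * u) / 2 := by positivity
  have sqrt_half_sq : (√(x * u) / 2) ^ 2 = x * u / 4 := by
    rw [div_pow, sq_sqrt (by positivity)]
    norm_num
  have sqrt_ratio_rpow : (u / x) ^ (ν / 2) = √(u / x) ^ ν := by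
    rw [sqrt_eq_rpow, ← rpow_mul (by positivity), one_div_mul_eq_div]
  have sqrt_ratio_mul : √(u / x) * (√(x * u) / 2) = u / 2 := by
    rw [← mul_div_assoc, ← sqrt_mul (by positivity), show u / x * (x * u) = u ^ 2 by field_simp,
      sqrt_sq hu.le]
  rw [rpow_add sqrt_half_pos, rpow_mul sqrt_half_pos.le, rpow_two, sqrt_half_sq, rpow_natCast,
    sqrt_ratio_rpow, ← sqrt_ratio_mul, mul_rpow (by positivity) (by positivity)]
  ring

theorem div_rpow_mul_tsum_bessel (ε : ℝ) (hu : 0 < u) (hx : 0 < x) :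
    (u / x) ^ (ν / 2) * ∑' n : ℕ, ε ^ n / (Gamma (n + 1) * Gamma (n + 1 + ν)) *
        (√(x * u) / 2) ^ (2 * n + ν) =
      (u / 2) ^ ν * ∑' n : ℕ, (ε * x * u / 2) ^ n / (n ! * gammaMoment ν n) := by
  rw [← tsum_mul_left, ← tsum_mul_left]
  refine tsum_congr fun n => ?_
  calc (u / x) ^ (ν / 2) *
        (ε ^ n / (Gamma (n + 1) * Gamma (n + 1 + ν)) * (√(x * u) / 2) ^ (2 * n + ν))
      = ε ^ n / (n ! * Gamma (ν + 1 + n)) * ((u / 2) ^ ν * (x * u / 4) ^ n) := by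
        rw [← div_rpow_mul_sqrt_rpow ν n hu hx, Gamma_nat_eq_factorial,
          show (n : ℝ) + 1 + ν = ν + 1 + n by ring]
        ring
    _ = (u / 2) ^ ν * ((ε * x * u / 2) ^ n / (n ! * gammaMoment ν n)) := by
        rw [gammaMoment, show ε * x * u / 2 = ε * (x * u / 4) * 2 by ring, mul_pow, mul_pow]
        field_simp

theorem besselKernel_of_pos (hu : 0 < u) (hx : 0 < x) :
    besselKernel ν x u =
      (1 / 2) * (u / x) ^ (ν / 2) * besselI ν √(x * u) * exp (-(x + u) / 2) := by
  have series_eq := div_rpow_mul_tsum_bessel ν 1 hu hx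
  simp only [one_pow, one_mul] at series_eq
  rw [besselKernel, besselI, gammaWeight, mul_assoc (1 / 2) _ (tsum _), series_eq, neg_add,
    add_div, exp_add]
  ring

theorem besselKernel_neg_of_pos (hu : 0 < u) (hy : 0 < y) :
    besselKernel ν (-y) u =
      (1 / 2) * (u / y) ^ (ν / 2) * besselJ ν √(u * y) * exp ((y - u) / 2) := by
  have series_eq := div_rpow_mul_tsum_bessel ν (-1) hu hy
  simp only [neg_one_mul] at series_eq
  rw [besselKernel, besselJ, gammaWeight, mul_comm u y, mul_assoc (1 / 2) _ (tsum _), series_eq,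
    neg_neg, sub_eq_add_neg, add_div, exp_add]
  ring

end Bessel

theorem typeIIP_eq_eval_conjTaylor {ν : ℝ} (hν : -1 < ν) {N : ℕ} (a : Fin N → ℝ) {y : ℝ}
    (hy : 0 < y) :
    typeIIP ν a y = (conjTaylor (gammaMoment ν) (-1) (∏ k, (X - C (a k)))).eval y := by
  calc typeIIP ν a y
      = ∫ u in Set.Ioi 0,
          besselKernel ν (-y) u * ((∏ k, (X - C (a k))).comp (-X)).eval u := by
        refine setIntegral_congr_fun measurableSet_Ioi fun u hu => ?_
        simp [besselKernel_neg_of_pos ν hu hy, eval_comp, eval_prod]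
    _ = (conjTaylor (gammaMoment ν) (-1) (∏ k, (X - C (a k)))).eval y := by
        rw [integral_besselKernel_mul_eval hν, conjTaylor_comp_neg_X, eval_comp, eval_neg, eval_X,
          neg_neg]

theorem integral_typeIIP_mul_besselI {ν : ℝ} (hν : -1 < ν) {N : ℕ} (a : Fin N → ℝ) {x : ℝ}
    (hx : 0 < x) :
    ∫ y in Set.Ioi 0, typeIIP ν a y *
        ((1 / 2) * (y / x) ^ (ν / 2) * besselI ν √(x * y) * exp (-(x + y) / 2)) =
      ∏ k, (x - a k) := by
  have moment_ne_zero (k : ℕ) : gammaMoment ν k ≠ 0 := (gammaMoment_pos hν k).ne'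
  calc _ = ∫ y in Set.Ioi 0, besselKernel ν x y *
          (conjTaylor (gammaMoment ν) (-1) (∏ k, (X - C (a k)))).eval y := by
        refine setIntegral_congr_fun measurableSet_Ioi fun y hy => ?_
        simp only [typeIIP_eq_eval_conjTaylor hν a hy, ← besselKernel_of_pos ν hy hx]
        ring
    _ = ∏ k, (x - a k) := by
        rw [integral_besselKernel_mul_eval hν, conjTaylor_conjTaylor moment_ne_zero,
          add_neg_cancel, conjTaylor_zero moment_ne_zero]
        simp [eval_prod]

theorem typeIIP_monic_and_orthogonal_general (ν : ℝ) (hν : -1 < ν) (N : ℕ) (a : Fin N → ℝ) :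
    (∃ P : ℝ[X], P.Monic ∧ P.natDegree = N ∧ ∀ y : ℝ, 0 < y → typeIIP ν a y = P.eval y) ∧
      ∀ x : ℝ, 0 < x →
        ∫ y in Set.Ioi 0, typeIIP ν a y *
            ((1 / 2) * (y / x) ^ (ν / 2) * besselI ν √(x * y) * exp (-(x + y) / 2)) =
          ∏ k, (x - a k) := by
  have moment_ne_zero (k : ℕ) : gammaMoment ν k ≠ 0 := (gammaMoment_pos hν k).ne'
  refine ⟨⟨conjTaylor (gammaMoment ν) (-1) (∏ k, (X - C (a k))), ?_, ?_, ?_⟩, ?_⟩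
  · exact (leadingCoeff_conjTaylor moment_ne_zero _ _).trans (monic_prod_X_sub_C _ _)
  · rw [natDegree_conjTaylor moment_ne_zero, natDegree_finsetProd_X_sub_C_eq_card, card_univ,
      Fintype.card_fin]
  · exact fun y => typeIIP_eq_eval_conjTaylor hν a
  · exact fun x => integral_typeIIP_mul_besselI hν a

/-- `P` is a monic polynomial of degree `N` on `(0,∞)` and satisfies the type-II
orthogonality relations with respect to the modified Bessel weights. -/
theorem typeIIP_monic_and_orthogonal
    (ν : ℝ) (hν : -1 < ν) (N : ℕ) (a : Fin N → ℝ)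
    (hapos : ∀ ℓ, 0 < a ℓ) (hdist : Function.Injective a) :
    (∃ P : Polynomial ℝ, P.Monic ∧ P.natDegree = N ∧
        ∀ y : ℝ, 0 < y → typeIIP ν a y = P.eval y) ∧
      ∀ j : Fin N,
        ∫ y in Set.Ioi (0 : ℝ),
            typeIIP ν a y *
              ((1 / 2) * (y / a j) ^ (ν / 2) * besselI ν (Real.sqrt (a j * y)) *
                Real.exp (-(a j + y) / 2)) = 0 := by
  obtain ⟨monic_polynomial, integral_eq_prod⟩ := typeIIP_monic_and_orthogonal_general ν hν N a
  exact ⟨monic_polynomial, fun j => (integral_eq_prod (a j) (hapos j)).trans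
    (prod_eq_zero (mem_univ j) (sub_self (a j)))⟩
end

section
/- Let x : ℕ → [0, ∞) be an injective sequence (a simple configuration on the nonnegative half-line) satisfying: (i) there exist α ∈ (1/2, 1) and C₁ > 0 with Σ_{i : x_i ≠ 0} x_i^{−α} ≤ C₁^{α}; (ii) there exist β > 0 and C₂ > 0 such that for every j, Σ_{i ≠ j} |x_i − x_j|^{−1} ≤ C₂ (max(x_j, 1))^{−β}. Then there exist θ ∈ (max(α, 1−β), 1) and C₃ > 0 such that for every j and every y < 0, the infinite product ∏_{i ≠ j} |1 − (y − x_j)/(x_i − x_j)| converges and satisfies ∏_{i ≠ j} |1 − (y − x_j)/(x_i − x_j)| ≤ exp[ C₃ ( (max(x_j, 1))^{θ} + (max(|y|, 1))^{θ} ) ]. -/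
open MeasureTheory Real

/-!
Each factor of the product is `|x_i - y| / |x_i - x_j|`. With `R_i = max |x_i| 1`, it is at most
`(1 + |y| / R_i) * (1 + R_j / |x_i - x_j|)`, and `1 + t ≤ exp (t ^ α / α)` for the first bracket,
`1 + t ≤ exp t` for the second, bound the whole product by
`exp (α⁻¹ * |y| ^ α * ∑ R_i ^ (-α) + R_j * ∑ |x_i - x_j|⁻¹)`. By (i) the first sum is finite, and by
(ii) the second term is at most `C₂ * R_j ^ (1 - β)`.
-/

lemma one_add_le_exp_rpow_div {t α : ℝ} (ht : 0 ≤ t) (hα₀ : 0 < α) (hα₁ : α ≤ 1) :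
    1 + t ≤ exp (t ^ α / α) := by
  have htα : 0 ≤ t ^ α := rpow_nonneg ht α
  calc 1 + t = 1 ^ α⁻¹ + (t ^ α) ^ α⁻¹ := by rw [one_rpow, rpow_rpow_inv ht hα₀.ne']
    _ ≤ (1 + t ^ α) ^ α⁻¹ :=
      add_rpow_le_rpow_add zero_le_one htα ((one_le_inv₀ hα₀).mpr hα₁)
    _ ≤ exp (t ^ α) ^ α⁻¹ := by
      gcongr
      rw [add_comm]
      exact add_one_le_exp _
    _ = exp (t ^ α / α) := by rw [← exp_mul, div_eq_mul_inv]

lemma tprod_le_exp_tsum {ι : Type*} {f g : ι → ℝ} (hf₀ : ∀ i, 0 ≤ f i) (hf : Multipliable f)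
    (hg : Summable g) (hfg : ∀ i, f i ≤ exp (g i)) : ∏' i, f i ≤ exp (∑' i, g i) :=
  le_of_tendsto_of_tendsto' hf.hasProd hg.hasSum.rexp fun _ ↦
    Finset.prod_le_prod (fun i _ ↦ hf₀ i) fun i _ ↦ hfg i

lemma summable_max_norm_one_rpow_neg {ι E : Type*} [NormedAddCommGroup E] {x : ι → E} {α : ℝ}
    (hα : 0 ≤ α) (hzeros : {i | x i = 0}.Finite)
    (hsum : Summable fun i : {i // x i ≠ 0} ↦ ‖x i‖ ^ (-α)) :
    Summable fun i ↦ max ‖x i‖ 1 ^ (-α) := by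
  refine hzeros.summable_compl_iff.mp (hsum.of_nonneg_of_le (fun i ↦ ?_) fun i ↦ ?_)
  · exact rpow_nonneg (by positivity) _
  · exact rpow_le_rpow_of_nonpos (norm_pos_iff.mpr i.2) (le_max_left _ _) (neg_nonpos.mpr hα)

section Factor

variable {𝕜 : Type*} [NormedField 𝕜] {z a : 𝕜}

lemma norm_one_sub_sub_div_sub_le (hza : z ≠ a) (y : 𝕜) :
    ‖1 - (y - a) / (z - a)‖ ≤ (1 + ‖y‖ / max ‖z‖ 1) * (1 + max ‖a‖ 1 * ‖z - a‖⁻¹) := by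
  have hdist : 0 < ‖z - a‖ := norm_pos_iff.mpr (sub_ne_zero.mpr hza)
  have hRz : max ‖z‖ 1 ≤ max ‖a‖ 1 + ‖z - a‖ := by
    refine max_le ?_ (by linarith [le_max_right ‖a‖ 1])
    linarith [norm_le_norm_add_norm_sub a z, le_max_left ‖a‖ 1, norm_sub_rev a z]
  calc ‖1 - (y - a) / (z - a)‖ = ‖z - y‖ / ‖z - a‖ := by
        rw [one_sub_div (sub_ne_zero.mpr hza), sub_sub_sub_cancel_right, norm_div]
    _ ≤ (max ‖z‖ 1 + ‖y‖) / ‖z - a‖ := by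
        gcongr
        exact (norm_sub_le z y).trans (by gcongr; exact le_max_left _ _)
    _ = (1 + ‖y‖ / max ‖z‖ 1) * (max ‖z‖ 1 / ‖z - a‖) := by field_simp
    _ ≤ (1 + ‖y‖ / max ‖z‖ 1) * ((max ‖a‖ 1 + ‖z - a‖) / ‖z - a‖) := by gcongr
    _ = (1 + ‖y‖ / max ‖z‖ 1) * (1 + max ‖a‖ 1 * ‖z - a‖⁻¹) := by field_simp; ring

lemma norm_one_sub_sub_div_sub_le_exp {α : ℝ} (hα₀ : 0 < α) (hα₁ : α ≤ 1) (hza : z ≠ a) (y : 𝕜) :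
    ‖1 - (y - a) / (z - a)‖ ≤
      exp (α⁻¹ * ‖y‖ ^ α * max ‖z‖ 1 ^ (-α) + max ‖a‖ 1 * ‖z - a‖⁻¹) := by
  have hy : 1 + ‖y‖ / max ‖z‖ 1 ≤ exp (α⁻¹ * ‖y‖ ^ α * max ‖z‖ 1 ^ (-α)) := by
    convert one_add_le_exp_rpow_div (t := ‖y‖ / max ‖z‖ 1) (by positivity) hα₀ hα₁ using 2
    rw [div_rpow (norm_nonneg y) (by positivity), rpow_neg (by positivity)]
    ring
  have ha : 1 + max ‖a‖ 1 * ‖z - a‖⁻¹ ≤ exp (max ‖a‖ 1 * ‖z - a‖⁻¹) := by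
    rw [add_comm]
    exact add_one_le_exp _
  rw [exp_add]
  exact (norm_one_sub_sub_div_sub_le hza y).trans (by gcongr)

end Factor

section Product

variable {ι 𝕜 : Type*} [NormedField 𝕜] {x : ι → 𝕜} {j : ι}

lemma multipliable_norm_one_sub_sub_div_sub
    (hsum : Summable fun i : {i // i ≠ j} ↦ ‖x i - x j‖⁻¹) (y : 𝕜) :
    Multipliable fun i : {i // i ≠ j} ↦ ‖1 - (y - x j) / (x i - x j)‖ := by
  simp only [sub_eq_add_neg (1 : 𝕜)]
  refine multipliable_norm_one_add_of_summable_norm ?_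
  simpa only [norm_neg, norm_mul, norm_inv, div_eq_mul_inv] using hsum.mul_left ‖y - x j‖

lemma tprod_norm_one_sub_sub_div_sub_le_exp {α : ℝ} (hα₀ : 0 < α) (hα₁ : α ≤ 1)
    (hinj : Function.Injective x) (hsumα : Summable fun i ↦ max ‖x i‖ 1 ^ (-α))
    (hsum : Summable fun i : {i // i ≠ j} ↦ ‖x i - x j‖⁻¹) (y : 𝕜) :
    ∏' i : {i // i ≠ j}, ‖1 - (y - x j) / (x i - x j)‖ ≤
      exp (α⁻¹ * ‖y‖ ^ α * ∑' i, max ‖x i‖ 1 ^ (-α) +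
        max ‖x j‖ 1 * ∑' i : {i // i ≠ j}, ‖x i - x j‖⁻¹) := by
  have hsumα_ne : Summable fun i : {i // i ≠ j} ↦ max ‖x i‖ 1 ^ (-α) :=
    hsumα.comp_injective Subtype.val_injective
  have htsum_ne : ∑' i : {i // i ≠ j}, max ‖x i‖ 1 ^ (-α) ≤ ∑' i, max ‖x i‖ 1 ^ (-α) :=
    Summable.tsum_subtype_le _ {i | i ≠ j} (fun i ↦ by positivity) hsumα
  have hsumα_mul := hsumα_ne.mul_left (α⁻¹ * ‖y‖ ^ α)
  have hsum_mul := hsum.mul_left (max ‖x j‖ 1)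
  refine (tprod_le_exp_tsum (fun _ ↦ norm_nonneg _) (multipliable_norm_one_sub_sub_div_sub hsum y)
    (hsumα_mul.add hsum_mul)
    fun i ↦ norm_one_sub_sub_div_sub_le_exp hα₀ hα₁ (hinj.ne i.2) y).trans ?_
  rw [hsumα_mul.tsum_add hsum_mul, tsum_mul_left, tsum_mul_left]
  gcongr

end Product

theorem weierstrass_product_bound_general {ι 𝕜 : Type*} [NormedField 𝕜] {x : ι → 𝕜}
    (hinj : Function.Injective x) {α β C₂ θ : ℝ} (hα₀ : 0 < α) (hα₁ : α ≤ 1)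
    (hsum₁ : Summable fun i : {i // x i ≠ 0} ↦ ‖x i‖ ^ (-α)) (hC₂ : 0 < C₂)
    (hsum₂ : ∀ j, Summable fun i : {i // i ≠ j} ↦ ‖x i - x j‖⁻¹)
    (hbd₂ : ∀ j, ∑' i : {i // i ≠ j}, ‖x i - x j‖⁻¹ ≤ C₂ * max ‖x j‖ 1 ^ (-β))
    (hθ : max α (1 - β) ≤ θ) :
    ∃ C₃ : ℝ, 0 < C₃ ∧ ∀ (j : ι) (y : 𝕜),
      (Multipliable fun i : {i // i ≠ j} ↦ ‖1 - (y - x j) / (x i - x j)‖) ∧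
      ∏' i : {i // i ≠ j}, ‖1 - (y - x j) / (x i - x j)‖ ≤
        exp (C₃ * (max ‖x j‖ 1 ^ θ + max ‖y‖ 1 ^ θ)) := by
  have hsumα := summable_max_norm_one_rpow_neg hα₀.le
    (Set.Subsingleton.finite fun i hi k hk ↦ hinj (hi.trans hk.symm)) hsum₁
  set S := ∑' i, max ‖x i‖ 1 ^ (-α)
  have : 0 ≤ S := tsum_nonneg fun i ↦ by positivity
  refine ⟨α⁻¹ * S + C₂, by positivity, fun j y ↦
    ⟨multipliable_norm_one_sub_sub_div_sub (hsum₂ j) y,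
      (tprod_norm_one_sub_sub_div_sub_le_exp hα₀ hα₁ hinj hsumα (hsum₂ j) y).trans ?_⟩⟩
  have hy : ‖y‖ ^ α ≤ max ‖y‖ 1 ^ θ :=
    (rpow_le_rpow (norm_nonneg y) (le_max_left _ _) hα₀.le).trans
      (rpow_le_rpow_of_exponent_le (le_max_right _ _) ((le_max_left _ _).trans hθ))
  have hxj : max ‖x j‖ 1 * ∑' i : {i // i ≠ j}, ‖x i - x j‖⁻¹ ≤ C₂ * max ‖x j‖ 1 ^ θ :=
    calc _ ≤ max ‖x j‖ 1 * (C₂ * max ‖x j‖ 1 ^ (-β)) := by gcongr; exact hbd₂ j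
      _ = C₂ * max ‖x j‖ 1 ^ (1 - β) := by
        rw [sub_eq_add_neg, rpow_add (by positivity), rpow_one]
        ring
      _ ≤ C₂ * max ‖x j‖ 1 ^ θ := by
        gcongr
        exacts [le_max_right _ _, (le_max_right _ _).trans hθ]
  refine exp_le_exp.mpr ?_
  calc _ ≤ α⁻¹ * max ‖y‖ 1 ^ θ * S + C₂ * max ‖x j‖ 1 ^ θ := by gcongr
    _ ≤ α⁻¹ * max ‖y‖ 1 ^ θ * S + C₂ * max ‖x j‖ 1 ^ θ +
        (α⁻¹ * S * max ‖x j‖ 1 ^ θ + C₂ * max ‖y‖ 1 ^ θ) :=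
      le_add_of_nonneg_right (by positivity)
    _ = (α⁻¹ * S + C₂) * (max ‖x j‖ 1 ^ θ + max ‖y‖ 1 ^ θ) := by ring

/-- Estimate for the Weierstrass canonical product of genus zero built on a
configuration on the nonnegative half-line satisfying conditions (C.A). -/
theorem weierstrass_product_bound
    (x : ℕ → ℝ) (hinj : Function.Injective x) (hnonneg : ∀ i, 0 ≤ x i)
    (α C₁ : ℝ) (hα₁ : 1 / 2 < α) (hα₂ : α < 1) (hC₁ : 0 < C₁)
    (hsum₁ : Summable fun i : {i : ℕ // x i ≠ 0} => (x i.1) ^ (-α))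
    (hbd₁ : (∑' i : {i : ℕ // x i ≠ 0}, (x i.1) ^ (-α)) ≤ C₁ ^ α)
    (β C₂ : ℝ) (hβ : 0 < β) (hC₂ : 0 < C₂)
    (hsum₂ : ∀ j : ℕ, Summable fun i : {i : ℕ // i ≠ j} => |x i.1 - x j|⁻¹)
    (hbd₂ : ∀ j : ℕ,
      (∑' i : {i : ℕ // i ≠ j}, |x i.1 - x j|⁻¹) ≤ C₂ * (max (x j) 1) ^ (-β)) :
    ∃ θ : ℝ, max α (1 - β) < θ ∧ θ < 1 ∧
      ∃ C₃ : ℝ, 0 < C₃ ∧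
        ∀ j : ℕ, ∀ y : ℝ, y < 0 →
          (Multipliable fun i : {i : ℕ // i ≠ j} => |1 - (y - x j) / (x i.1 - x j)|) ∧
          (∏' i : {i : ℕ // i ≠ j}, |1 - (y - x j) / (x i.1 - x j)|) ≤
            Real.exp (C₃ * ((max (x j) 1) ^ θ + (max |y| 1) ^ θ)) := by
  obtain ⟨θ, hθ, hθ₁⟩ := exists_between (max_lt hα₂ (sub_lt_self 1 hβ))
  have hnorm : ∀ i, ‖x i‖ = x i := fun i ↦ norm_of_nonneg (hnonneg i)
  obtain ⟨C₃, hC₃, hbound⟩ := weierstrass_product_bound_general hinj (by linarith) hα₂.le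
    (by simpa only [hnorm] using hsum₁) hC₂ hsum₂ (by simpa only [hnorm] using! hbd₂) hθ.le
  exact ⟨θ, hθ, hθ₁, C₃, hC₃, fun j y _ ↦ by simpa only [hnorm] using! hbound j y⟩
end

section
/- Let ν > −1 and let (j_{ν,k})_{k≥1} be the strictly increasing enumeration of the positive zeros of the Bessel function J_ν. Then for every i ≥ 1 and every real z > 0 with z ≠ j_{ν,i}, the infinite product ∏_{k ≠ i} (j_{ν,k}² − z²)/(j_{ν,k}² − j_{ν,i}²) converges and J_{ν+1}(j_{ν,i}) · (z/j_{ν,i})^{ν} · ∏_{k ≠ i} (j_{ν,k}² − z²)/(j_{ν,k}² − j_{ν,i}²) = 2 j_{ν,i} · J_ν(z) / (j_{ν,i}² − z²). -/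
open Real

open Filter Topology Metric
open scoped ComplexConjugate

/-!
Write `J_ν(z) = (z / 2) ^ ν * F_ν(z ^ 2 / 4)`, where `F_ν` is entire and grows more slowly than
every exponential `exp (ε * ‖w‖)`.

For such a function `f` with simple zeros `a_k ≠ 0`, dividing out the zeros of modulus less than `R`
leaves a function without zeros in the disc of radius `R`, still bounded there by `C * exp (ε * R)`
(maximum principle on the circle of radius `2 * R`). By Borel–Carathéodory its logarithm, normalised
at the origin, tends to `0` locally as `R → ∞`, so `f w = f 0 * ∏ (1 - w / a_k)`. Comparing the
values of `f w / (1 - w / a_i)` at `w` and at `a_i` gives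
`∏_{k ≠ i} (a_k - w) / (a_k - a_i) = f w / ((w - a_i) * f'(a_i))`.

It remains to see that all zeros of `F_ν` are positive and simple. If `a` is a nonreal zero, then
`t ↦ Im (conj (F_ν(a t)) * a * t ^ (ν + 1) * F_{ν+1}(a t))` vanishes at `0` and `1` and has
derivative `t ^ ν * |F_ν(a t)| ^ 2 * Im a`, so Rolle's theorem yields a zero `a t` with `0 < t < 1`;
this contradicts the choice of a zero of least modulus on the segment from `0` to `a`. On `(-∞, 0]`
the series of `F_ν` has positive terms. Finally `F_ν' = -F_{ν+1}`, and by the three-term recurrence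
a common zero of `F_ν` and `F_{ν+1}` would annihilate all derivatives of `F_ν`.
-/

/-! ### Entire functions of minimal exponential type -/

/-- Growth of at most order one and type zero, below every exponential `exp (ε * ‖w‖)`. This is
the growth condition alone; that `f` is entire is assumed separately. -/
def HasMinimalExponentialType (f : ℂ → ℂ) : Prop :=
  ∀ ε > 0, ∃ C : ℝ, ∀ w, ‖f w‖ ≤ C * Real.exp (ε * ‖w‖)

/-- The family `a` lists the zeros of `f`, each exactly once, and all of them are simple. -/
structure IsSimpleZeroEnumeration {ι : Type*} (f : ℂ → ℂ) (a : ι → ℂ) : Prop where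
  injective : Function.Injective a
  eq_zero_iff : ∀ w, f w = 0 ↔ ∃ k, a k = w
  deriv_ne_zero : ∀ k, deriv f (a k) ≠ 0

section Factorization

variable {ι : Type*} {f g : ℂ → ℂ} {a : ι → ℂ} {s : Finset ι}

theorem exists_differentiable_eq_prod_mul (hf : Differentiable ℂ f) (ha : Set.InjOn a s)
    (ha0 : ∀ k ∈ s, a k ≠ 0) (hfa : ∀ k ∈ s, f (a k) = 0) :
    ∃ g : ℂ → ℂ, Differentiable ℂ g ∧ ∀ w, f w = (∏ k ∈ s, (1 - w / a k)) * g w := by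
  classical
  induction s using Finset.induction_on with
  | empty => exact ⟨f, hf, by simp⟩
  | insert i s his ih =>
    simp only [Finset.mem_insert, forall_eq_or_imp] at ha0 hfa
    obtain ⟨hai, has⟩ := ha0
    obtain ⟨g, hg, hfg⟩ := ih (ha.mono (by simp)) has hfa.2
    have hprod : ∏ k ∈ s, (1 - a i / a k) ≠ 0 := Finset.prod_ne_zero_iff.2 fun k hk h ↦
      his <| by
        have hik : a i = a k := ((div_eq_one_iff_eq (has k hk)).1 (sub_eq_zero.1 h).symm)
        rwa [ha (by simp) (by simp [hk]) hik]
    have hgi : g (a i) = 0 := (mul_eq_zero.1 ((hfg (a i)).symm.trans hfa.1)).resolve_left hprod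
    refine ⟨fun w ↦ -a i * dslope g (a i) w, ?_, fun w ↦ ?_⟩
    · exact (differentiableOn_univ.1 <| (Complex.differentiableOn_dslope univ_mem).2
        hg.differentiableOn).const_mul _
    · have hslope : (w - a i) * dslope g (a i) w = g w := by
        simpa only [hgi, sub_zero, smul_eq_mul] using sub_smul_dslope g (a i) w
      rw [hfg w, Finset.prod_insert his, ← hslope]
      field_simp
      ring

theorem hasDerivAt_one_sub_div_mul {b : ℂ} (hb : b ≠ 0) (hg : DifferentiableAt ℂ g b) :
    HasDerivAt (fun w ↦ (1 - w / b) * g w) (-(g b / b)) b := by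
  convert! (((hasDerivAt_id b).div_const b).const_sub 1).mul hg.hasDerivAt using 1
  simp only [id, div_self hb, sub_self, zero_mul, add_zero]
  ring

theorem one_le_norm_one_sub_div {w b : ℂ} (h : 2 * ‖b‖ ≤ ‖w‖) : 1 ≤ ‖1 - w / b‖ := by
  rcases eq_or_ne b 0 with rfl | hb
  · simp
  have hwb : 2 ≤ ‖w / b‖ := by rwa [norm_div, le_div_iff₀ (norm_pos_iff.2 hb)]
  have := norm_sub_norm_le (w / b) 1
  rw [norm_one, norm_sub_rev] at this
  linarith

theorem norm_le_of_eq_prod_mul (hg : Differentiable ℂ g)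
    (hfg : ∀ w, f w = (∏ k ∈ s, (1 - w / a k)) * g w) {R B : ℝ}
    (haR : ∀ k ∈ s, 2 * ‖a k‖ ≤ R) (hfB : ∀ w ∈ sphere (0 : ℂ) R, ‖f w‖ ≤ B) {w : ℂ}
    (hw : w ∈ ball (0 : ℂ) R) : ‖g w‖ ≤ B := by
  refine Complex.norm_le_of_forall_mem_frontier_norm_le isBounded_ball hg.diffContOnCl
    (fun v hv ↦ ?_) (subset_closure hw)
  rw [frontier_ball _ (pos_of_mem_ball hw).ne'] at hv
  refine le_trans ?_ (hfB v hv)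
  rw [hfg v, norm_mul, norm_prod]
  refine le_mul_of_one_le_left (norm_nonneg _) (Finset.one_le_prod fun k hk ↦ ?_)
  exact one_le_norm_one_sub_div ((haR k hk).trans_eq (mem_sphere_zero_iff_norm.1 hv).symm)

theorem HasMinimalExponentialType.of_eq_prod_mul (hf : HasMinimalExponentialType f)
    (hg : Differentiable ℂ g) (hfg : ∀ w, f w = (∏ k ∈ s, (1 - w / a k)) * g w) :
    HasMinimalExponentialType g := fun ε hε ↦ by
  obtain ⟨C, hC⟩ := hf ε hε
  set D : ℝ := 1 + ∑ k ∈ s, 2 * ‖a k‖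
  refine ⟨C * Real.exp (ε * D), fun w ↦ ?_⟩
  have hD : 0 < D := by positivity
  have haD : ∀ k ∈ s, 2 * ‖a k‖ ≤ ‖w‖ + D := fun k hk ↦ by
    have := Finset.single_le_sum (f := fun k ↦ 2 * ‖a k‖) (fun _ _ ↦ by positivity) hk
    have := norm_nonneg w
    grind
  rw [mul_assoc, ← Real.exp_add, ← mul_add, add_comm D]
  refine norm_le_of_eq_prod_mul hg hfg haD (fun v hv ↦ ?_)
    (mem_ball_zero_iff.2 (lt_add_of_pos_right _ hD))
  simpa only [mem_sphere_zero_iff_norm.1 hv] using hC v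

end Factorization

namespace IsSimpleZeroEnumeration

variable {ι : Type*} {f g : ℂ → ℂ} {a : ι → ℂ}

theorem ne_zero (ha : IsSimpleZeroEnumeration f a) (hf0 : f 0 ≠ 0) (k : ι) : a k ≠ 0 :=
  fun h ↦ hf0 ((ha.eq_zero_iff 0).2 ⟨k, h⟩)

theorem exists_differentiable_eq_prod_mul (ha : IsSimpleZeroEnumeration f a)
    (hf : Differentiable ℂ f) (hf0 : f 0 ≠ 0) (s : Finset ι) :
    ∃ g : ℂ → ℂ, Differentiable ℂ g ∧ ∀ w, f w = (∏ k ∈ s, (1 - w / a k)) * g w :=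
  _root_.exists_differentiable_eq_prod_mul hf ha.injective.injOn (fun k _ ↦ ha.ne_zero hf0 k)
    fun k _ ↦ (ha.eq_zero_iff _).2 ⟨k, rfl⟩

theorem of_eq_prod_mul (ha : IsSimpleZeroEnumeration f a) (hf0 : f 0 ≠ 0) {s : Finset ι}
    (hg : Differentiable ℂ g) (hfg : ∀ w, f w = (∏ k ∈ s, (1 - w / a k)) * g w)
    {p : ι → Prop} (hp : ∀ k, p k ↔ k ∉ s) :
    IsSimpleZeroEnumeration g fun k : Subtype p ↦ a k := by
  -- At a zero of `g` the derivative of `f` is that of `g` times the product, so its nonvanishing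
  -- gives both that the point is none of the removed zeros and that it is a simple zero of `g`.
  have hderiv : ∀ w, g w = 0 → deriv f w = (∏ k ∈ s, (1 - w / a k)) * deriv g w := fun w hw ↦ by
    have hP : DifferentiableAt ℂ (fun v ↦ ∏ k ∈ s, (1 - v / a k)) w := by fun_prop
    rw [funext hfg, deriv_fun_mul hP (hg w), hw, mul_zero, zero_add]
  have hzero : ∀ k : Subtype p, g (a k) = 0 := fun ⟨k, hk⟩ ↦ by
    refine (mul_eq_zero.1 ((hfg (a k)).symm.trans ((ha.eq_zero_iff _).2 ⟨k, rfl⟩))).resolve_left ?_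
    refine Finset.prod_ne_zero_iff.2 fun l hl h ↦ (hp k).1 hk ?_
    rwa [ha.injective ((div_eq_one_iff_eq (ha.ne_zero hf0 l)).1 (sub_eq_zero.1 h).symm)]
  refine ⟨ha.injective.comp Subtype.val_injective, fun w ↦ ⟨fun hw ↦ ?_, ?_⟩, fun k ↦ ?_⟩
  · obtain ⟨k, rfl⟩ := (ha.eq_zero_iff w).1 (by rw [hfg, hw, mul_zero])
    have hne := left_ne_zero_of_mul ((hderiv _ hw).symm.trans_ne (ha.deriv_ne_zero k))
    refine ⟨⟨k, (hp k).2 fun hk ↦ Finset.prod_ne_zero_iff.1 hne k hk ?_⟩, rfl⟩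
    rw [div_self (ha.ne_zero hf0 k), sub_self]
  · rintro ⟨k, rfl⟩
    exact hzero k
  · exact right_ne_zero_of_mul ((hderiv _ (hzero k)).symm.trans_ne (ha.deriv_ne_zero k))

theorem finite_norm_lt (ha : IsSimpleZeroEnumeration f a) (hf : Differentiable ℂ f)
    (R : ℝ) : {k | ‖a k‖ < R}.Finite := by
  rcases isEmpty_or_nonempty ι with _ | ⟨⟨k⟩⟩
  · exact Set.toFinite _
  have hf_ne : ¬Set.EqOn f 0 Set.univ := fun h ↦
    ha.deriv_ne_zero k (by simp [Set.eqOn_univ _ _ |>.1 h])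
  have hcodiscrete : ∀ᶠ w in codiscreteWithin Set.univ, f w ≠ 0 :=
    (hf.differentiableOn.analyticOnNhd isOpen_univ
      |>.eqOn_zero_or_eventually_ne_zero_of_preconnected isPreconnected_univ).resolve_left hf_ne
  have hfin := (isCompact_closedBall (0 : ℂ) R).finite_sdiff_of_mem_codiscreteWithin
    (Filter.codiscreteWithin_mono (Set.subset_univ _) hcodiscrete)
  refine (hfin.preimage ha.injective.injOn).subset fun k hk ↦ ⟨?_, ?_⟩
  · exact mem_closedBall_zero_iff.2 (show ‖a k‖ < R from hk).le
  · simpa using (ha.eq_zero_iff _).2 ⟨k, rfl⟩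

end IsSimpleZeroEnumeration

section Logarithm

variable {h : ℂ → ℂ} {R M : ℝ}

theorem exists_eq_mul_exp_on_ball (hR : 0 < R) (hd : DifferentiableOn ℂ h (ball 0 R))
    (hne : ∀ w ∈ ball 0 R, h w ≠ 0) :
    ∃ L : ℂ → ℂ, L 0 = 0 ∧ DifferentiableOn ℂ L (ball 0 R) ∧
      ∀ w ∈ ball 0 R, h w = h 0 * Complex.exp (L w) := by
  obtain ⟨L, hL0, hL⟩ := ((hd.deriv isOpen_ball).div hd hne).isExactOn_ball.with_val_at 0 0
  refine ⟨L, hL0, fun w hw ↦ (hL w hw).differentiableAt.differentiableWithinAt, fun w hw ↦ ?_⟩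
  have hderiv : ∀ v ∈ ball 0 R, HasDerivAt (fun v ↦ h v * Complex.exp (-L v)) 0 v := fun v hv ↦ by
    convert! (hd.differentiableAt (isOpen_ball.mem_nhds hv)).hasDerivAt.mul (hL v hv).neg.cexp
      using 1
    simp only [Pi.div_apply, Pi.neg_apply]
    field_simp [hne v hv]
    ring
  have hconst : h w * Complex.exp (-L w) = h 0 * Complex.exp (-L 0) :=
    isOpen_ball.is_const_of_deriv_eq_zero (convex_ball _ _).isPreconnected
      (fun v hv ↦ (hderiv v hv).differentiableAt.differentiableWithinAt)
      (fun v hv ↦ (hderiv v hv).deriv) hw (mem_ball_self hR)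
  rw [hL0, neg_zero, Complex.exp_zero, mul_one] at hconst
  rw [← hconst, mul_assoc, ← Complex.exp_add, neg_add_cancel, Complex.exp_zero, mul_one]

theorem exists_eq_mul_exp_and_norm_le (hM : 0 < M)
    (hd : DifferentiableOn ℂ h (ball 0 R)) (hne : ∀ w ∈ ball 0 R, h w ≠ 0)
    (hle : ∀ w ∈ ball 0 R, ‖h w‖ ≤ ‖h 0‖ * Real.exp M) {w : ℂ} (hw : w ∈ ball 0 R) :
    ∃ L : ℂ, h w = h 0 * Complex.exp L ∧ ‖L‖ ≤ 2 * M * ‖w‖ / (R - ‖w‖) := by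
  have hR : 0 < R := pos_of_mem_ball hw
  obtain ⟨L, hL0, hLd, hL⟩ := exists_eq_mul_exp_on_ball hR hd hne
  refine ⟨L w, hL w hw, Complex.borelCaratheodory_zero hM hLd (fun v hv ↦ ?_) hR hw hL0⟩
  have hv' := hle v hv
  rw [hL v hv, norm_mul, Complex.norm_exp] at hv'
  exact Real.exp_le_exp.1
    (le_of_mul_le_mul_left hv' (norm_pos_iff.2 (hne 0 (mem_ball_self hR))))

end Logarithm

theorem tendsto_two_mul_add_mul_div_sub (K ε x : ℝ) :
    Tendsto (fun R ↦ 2 * (K + ε * R) * x / (R - x)) atTop (𝓝 (2 * ε * x)) := by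
  have hlim : Tendsto (fun R ↦ 2 * (K + ε * x) * x / (R - x) + 2 * ε * x) atTop
      (𝓝 (0 + 2 * ε * x)) :=
    (tendsto_const_nhds.div_atTop (tendsto_atTop_add_const_right _ (-x) tendsto_id)).add_const _
  rw [zero_add] at hlim
  refine hlim.congr' ?_
  filter_upwards [eventually_gt_atTop x] with R hR
  field_simp [(sub_pos.2 hR).ne']
  ring

theorem tendsto_of_zeroFree_of_norm_le_exp {g : ℝ → ℂ → ℂ} {c : ℂ}
    (hd : ∀ R, DifferentiableOn ℂ (g R) (ball 0 R)) (hg0 : ∀ R, g R 0 = c)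
    (hne : ∀ R, ∀ w ∈ ball 0 R, g R w ≠ 0)
    (hgrowth : ∀ ε > 0, ∃ C, ∀ R > 0, ∀ w ∈ ball 0 R, ‖g R w‖ ≤ C * Real.exp (ε * R)) (w : ℂ) :
    Tendsto (fun R ↦ g R w) atTop (𝓝 c) := by
  have hc : c ≠ 0 := hg0 1 ▸ hne 1 0 (mem_ball_self one_pos)
  have hlog : ∀ δ > 0, ∀ᶠ R in atTop, ∃ L, g R w = c * Complex.exp L ∧ ‖L‖ < δ := by
    intro δ hδ
    obtain ⟨ε, hε, hεδ⟩ : ∃ ε > 0, 2 * ε * ‖w‖ < δ :=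
      ⟨δ / (2 * (‖w‖ + 1)), by positivity, by field_simp; linarith⟩
    obtain ⟨C, hC⟩ := hgrowth ε hε
    have hCc : C ≤ ‖c‖ * Real.exp |C / ‖c‖| := by
      rw [← div_le_iff₀' (norm_pos_iff.2 hc)]
      linarith [Real.add_one_le_exp |C / ‖c‖|, le_abs_self (C / ‖c‖)]
    filter_upwards [eventually_gt_atTop ‖w‖,
      (tendsto_two_mul_add_mul_div_sub |C / ‖c‖| ε ‖w‖).eventually_lt_const hεδ] with R hwR hRδ
    have hR : 0 < R := (norm_nonneg w).trans_lt hwR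
    have hle : ∀ v ∈ ball 0 R, ‖g R v‖ ≤ ‖g R 0‖ * Real.exp (|C / ‖c‖| + ε * R) := fun v hv ↦ by
      rw [hg0, Real.exp_add, ← mul_assoc]
      exact (hC R hR v hv).trans (by gcongr)
    obtain ⟨L, hL, hLle⟩ := exists_eq_mul_exp_and_norm_le (by positivity) (hd R) (hne R) hle
      (mem_ball_zero_iff.2 hwR)
    exact ⟨L, hg0 R ▸ hL, hLle.trans_lt hRδ⟩
  have hexp : Tendsto (fun L ↦ c * Complex.exp L) (𝓝 0) (𝓝 c) := by
    simpa using (Complex.continuous_exp.const_mul c).tendsto 0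
  rw [Metric.tendsto_nhds]
  intro η hη
  obtain ⟨δ, hδ, hδη⟩ := Metric.tendsto_nhds_nhds.1 hexp η hη
  filter_upwards [hlog δ hδ] with R ⟨L, hL, hLδ⟩
  rw [hL]
  exact hδη (by simpa using hLδ)

theorem one_add_sum_le_prod_one_add {ι : Type*} (s : Finset ι) {x : ι → ℝ}
    (hx : ∀ k ∈ s, 0 ≤ x k) : 1 + ∑ k ∈ s, x k ≤ ∏ k ∈ s, (1 + x k) := by
  classical
  induction s using Finset.induction_on with
  | empty => simp
  | insert i s his ih =>
    simp only [Finset.mem_insert, forall_eq_or_imp] at hx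
    rw [Finset.sum_insert his, Finset.prod_insert his]
    nlinarith [ih hx.2, hx.1, Finset.sum_nonneg hx.2]

namespace IsSimpleZeroEnumeration

variable {ι : Type*} {f : ℂ → ℂ} {a : ι → ℂ}

theorem tendsto_prod_one_sub_div (ha : IsSimpleZeroEnumeration f a) (hf : Differentiable ℂ f)
    (hf0 : f 0 ≠ 0) (hmin : HasMinimalExponentialType f) {s : ℝ → Finset ι}
    (hs : ∀ R k, k ∈ s R ↔ ‖a k‖ < R) (w : ℂ) :
    Tendsto (fun R ↦ ∏ k ∈ s R, (1 - w / a k)) atTop (𝓝 (f w / f 0)) := by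
  choose g hg hfg using fun R ↦ ha.exists_differentiable_eq_prod_mul hf hf0 (s R)
  have hg0 : ∀ R, g R 0 = f 0 := fun R ↦ by simp [hfg R 0]
  have hne : ∀ R, ∀ v ∈ ball 0 R, g R v ≠ 0 := fun R v hv hgv ↦ by
    obtain ⟨⟨k, hk⟩, rfl⟩ :=
      ((ha.of_eq_prod_mul hf0 (hg R) (hfg R) fun _ ↦ Iff.rfl).eq_zero_iff v).1 hgv
    exact hk ((hs R k).2 (mem_ball_zero_iff.1 hv))
  have hgrowth : ∀ ε > 0, ∃ C, ∀ R > 0, ∀ v ∈ ball 0 R, ‖g R v‖ ≤ C * Real.exp (ε * R) := by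
    intro ε hε
    obtain ⟨C, hC⟩ := hmin (ε / 2) (by positivity)
    refine ⟨C, fun R hR v hv ↦ norm_le_of_eq_prod_mul (hg R) (hfg R) (R := 2 * R)
      (fun k hk ↦ ?_) (fun u hu ↦ ?_) (ball_subset_ball (by linarith) hv)⟩
    · linarith [(hs R k).1 hk]
    · convert! hC u using 3
      rw [mem_sphere_zero_iff_norm.1 hu]
      ring
  refine (tendsto_const_nhds.div (tendsto_of_zeroFree_of_norm_le_exp
    (fun R ↦ (hg R).differentiableOn) hg0 hne hgrowth w) hf0).congr' ?_
  filter_upwards [eventually_gt_atTop ‖w‖] with R hR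
  rw [Pi.div_apply, hfg R w, mul_div_cancel_right₀ _ (hne R w (mem_ball_zero_iff.2 hR))]

theorem exists_tendsto_prod_one_sub_div (ha : IsSimpleZeroEnumeration f a)
    (hf : Differentiable ℂ f) (hf0 : f 0 ≠ 0) (hmin : HasMinimalExponentialType f) :
    ∃ s : ℝ → Finset ι, Tendsto s atTop atTop ∧
      ∀ w, Tendsto (fun R ↦ ∏ k ∈ s R, (1 - w / a k)) atTop (𝓝 (f w / f 0)) := by
  set s : ℝ → Finset ι := fun R ↦ (ha.finite_norm_lt hf R).toFinset
  have hs : ∀ R k, k ∈ s R ↔ ‖a k‖ < R := fun R k ↦ Set.Finite.mem_toFinset _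
  refine ⟨s, tendsto_atTop_finset_of_monotone (fun R R' hR k hk ↦ ?_) fun k ↦ ?_,
    ha.tendsto_prod_one_sub_div hf hf0 hmin hs⟩
  · exact (hs R' k).2 (((hs R k).1 hk).trans_le hR)
  · exact (exists_gt ‖a k‖).imp fun R ↦ (hs R k).2

theorem hasProd_one_sub_div (ha : IsSimpleZeroEnumeration f a) (hf : Differentiable ℂ f)
    (hf0 : f 0 ≠ 0) (hmin : HasMinimalExponentialType f) (hsum : Summable fun k ↦ ‖a k‖⁻¹)
    (w : ℂ) : HasProd (fun k ↦ 1 - w / a k) (f w / f 0) := by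
  obtain ⟨s, hs, hlim⟩ := ha.exists_tendsto_prod_one_sub_div hf hf0 hmin
  have hmul : Multipliable fun k ↦ 1 - w / a k := by
    simp only [sub_eq_add_neg]
    refine multipliable_one_add_of_summable ?_
    simpa only [norm_neg, norm_mul, norm_inv, div_eq_mul_inv] using hsum.mul_left ‖w‖
  rw [← tendsto_nhds_unique (hmul.hasProd.comp hs) (hlim w)]
  exact hmul.hasProd

theorem summable_inv_of_pos {a : ι → ℝ} (ha : IsSimpleZeroEnumeration f fun k ↦ (a k : ℂ))
    (hf : Differentiable ℂ f) (hmin : HasMinimalExponentialType f) (hpos : ∀ k, 0 < a k) :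
    Summable fun k ↦ (a k)⁻¹ := by
  have hf0 : f 0 ≠ 0 := fun h ↦ by
    obtain ⟨k, hk⟩ := (ha.eq_zero_iff 0).1 h
    exact (hpos k).ne' (Complex.ofReal_eq_zero.1 hk)
  obtain ⟨s, hs, hlim⟩ := ha.exists_tendsto_prod_one_sub_div hf hf0 hmin
  have hinv : ∀ k, 0 ≤ (a k)⁻¹ := fun k ↦ (inv_pos.2 (hpos k)).le
  have hnorm : ∀ k, ‖1 - (-1) / (a k : ℂ)‖ = 1 + (a k)⁻¹ := fun k ↦ by
    rw [neg_div, sub_neg_eq_add, one_div, ← Complex.ofReal_inv, ← Complex.ofReal_one,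
      ← Complex.ofReal_add, Complex.norm_of_nonneg (by linarith [hinv k])]
  -- Positivity of the zeros makes the factors at `w = -1` real and larger than one.
  refine summable_of_sum_le hinv (c := ‖f (-1) / f 0‖) fun t ↦ ge_of_tendsto (hlim (-1)).norm ?_
  filter_upwards [hs.eventually_ge_atTop t] with R hR
  simp only [norm_prod, hnorm]
  calc ∑ k ∈ t, (a k)⁻¹ ≤ ∑ k ∈ s R, (a k)⁻¹ :=
        Finset.sum_le_sum_of_subset_of_nonneg hR fun k _ _ ↦ hinv k
    _ ≤ ∏ k ∈ s R, (1 + (a k)⁻¹) := by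
        linarith [one_add_sum_le_prod_one_add (s R) (x := fun k ↦ (a k)⁻¹) fun k _ ↦ hinv k]

theorem hasProd_sub_div_sub (ha : IsSimpleZeroEnumeration f a) (hf : Differentiable ℂ f)
    (hf0 : f 0 ≠ 0) (hmin : HasMinimalExponentialType f) (hsum : Summable fun k ↦ ‖a k‖⁻¹)
    (i : ι) {w : ℂ} (hw : w ≠ a i) :
    HasProd (fun k : {k // k ≠ i} ↦ (a k - w) / (a k - a i))
      (f w / ((w - a i) * deriv f (a i))) := by
  obtain ⟨g, hg, hfg'⟩ := ha.exists_differentiable_eq_prod_mul hf hf0 {i}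
  have hfg : ∀ v, f v = (1 - v / a i) * g v := fun v ↦ by simpa using hfg' v
  have hg0 : g 0 ≠ 0 := by simpa [hfg 0] using hf0
  have hai := ha.ne_zero hf0 i
  have hderiv : deriv f (a i) = -(g (a i) / a i) := by
    rw [funext hfg, (hasDerivAt_one_sub_div_mul hai (hg _)).deriv]
  have hgi : g (a i) ≠ 0 := fun h ↦ ha.deriv_ne_zero i (by simp [hderiv, h])
  have hprod : ∀ v, HasProd (fun k : {k // k ≠ i} ↦ 1 - v / a k) (g v / g 0) :=
    (ha.of_eq_prod_mul hf0 hg hfg' (by simp)).hasProd_one_sub_div hg hg0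
      (hmin.of_eq_prod_mul hg hfg') (hsum.subtype _)
  have hquot := (hprod w).div₀ (hprod (a i)) (div_ne_zero hgi hg0)
  convert! hquot using 1
  · funext k
    have hak := ha.ne_zero hf0 k
    have hki : a k - a i ≠ 0 := sub_ne_zero.2 (ha.injective.ne k.2)
    field_simp
  · have hwi := sub_ne_zero.2 hw
    rw [hderiv, hfg w]
    field_simp
    ring

end IsSimpleZeroEnumeration

theorem hasProd_ofReal {ι : Type*} {x : ι → ℝ} {p : ℝ} :
    HasProd (fun k ↦ (x k : ℂ)) p ↔ HasProd x p :=
  Topology.IsInducing.hasProd_iff (g := Complex.ofRealHom)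
    Complex.isUniformEmbedding_ofReal.isInducing x p

theorem hasDerivAt_of_hasSum_mul_pow {c : ℕ → ℂ} {f f' : ℂ → ℂ}
    (hf : ∀ w, HasSum (fun n ↦ c n * w ^ n) (f w))
    (hf' : ∀ w, HasSum (fun n ↦ (n + 1) * c (n + 1) * w ^ n) (f' w)) (w : ℂ) :
    HasDerivAt f (f' w) w := by
  have hw : w ∈ ball (0 : ℂ) (‖w‖ + 1) := mem_ball_zero_iff.2 (lt_add_one _)
  have hsum : Summable fun n ↦ ‖c n * ((‖w‖ + 1 : ℝ) : ℂ) ^ n‖ := (hf _).summable.norm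
  have hdiff : ∀ n, DifferentiableOn ℂ (fun v ↦ c n * v ^ n) (ball 0 (‖w‖ + 1)) :=
    fun n ↦ by fun_prop
  have hle : ∀ n, ∀ v ∈ ball (0 : ℂ) (‖w‖ + 1),
      ‖c n * v ^ n‖ ≤ ‖c n * ((‖w‖ + 1 : ℝ) : ℂ) ^ n‖ := fun n v hv ↦ by
    rw [norm_mul, norm_mul, norm_pow, norm_pow, Complex.norm_of_nonneg (by positivity)]
    gcongr
    exact (mem_ball_zero_iff.1 hv).le
  have hftsum : f = fun v ↦ ∑' n, c n * v ^ n := funext fun v ↦ (hf v).tsum_eq.symm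
  have hfd : DifferentiableAt ℂ f w := by
    rw [hftsum]
    exact (Complex.differentiableOn_tsum_of_summable_norm hsum hdiff isOpen_ball hle
      |>.differentiableAt (isOpen_ball.mem_nhds hw))
  have hderiv := Complex.hasSum_deriv_of_summable_norm hsum hdiff isOpen_ball hle hw
  rw [← hftsum, ← hasSum_nat_add_iff' 1] at hderiv
  convert! hfd.hasDerivAt using 1
  refine (hf' w).unique ?_
  simpa [mul_comm, mul_left_comm, mul_assoc] using hderiv

theorem hasMinimalExponentialType_of_hasSum_div_factorial {c : ℕ → ℂ} {f : ℂ → ℂ}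
    (hf : ∀ w, HasSum (fun n ↦ c n / n.factorial * w ^ n) (f w))
    (hc : ∀ r > 0, ∃ C, ∀ n, ‖c n‖ * r ^ n ≤ C) : HasMinimalExponentialType f := fun ε hε ↦ by
  obtain ⟨C, hC⟩ := hc ε⁻¹ (inv_pos.2 hε)
  refine ⟨C, fun w ↦ ?_⟩
  have hexp : HasSum (fun n : ℕ ↦ C * ((ε * ‖w‖) ^ n / n.factorial)) (C * Real.exp (ε * ‖w‖)) := by
    rw [Real.exp_eq_exp_ℝ]
    exact (NormedSpace.expSeries_div_hasSum_exp (ε * ‖w‖)).mul_left C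
  refine (hf w).norm_le_of_bounded hexp fun n ↦ ?_
  calc ‖c n / n.factorial * w ^ n‖
      = ‖c n‖ * ε⁻¹ ^ n * ((ε * ‖w‖) ^ n / n.factorial) := by
        rw [norm_mul, norm_div, norm_pow, RCLike.norm_natCast, mul_pow, inv_pow]
        field_simp
    _ ≤ C * ((ε * ‖w‖) ^ n / n.factorial) := by gcongr; exact hC n

/-! ### The entire Bessel function -/

/-- The entire function `F_ν` with `J_ν(z) = (z / 2) ^ ν * F_ν(z ^ 2 / 4)`, that is
`F_ν(w) = ₀F₁(; ν + 1; -w) / Γ(ν + 1)`. -/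
noncomputable def besselEntire (ν w : ℂ) : ℂ :=
  Complex.regularizedHGFun 0 {ν + 1} (-w)

/-- The Taylor coefficients of `besselEntire ν` at the origin. They are meaningful for every complex
`ν`, because `Complex.Gamma` takes the value `0` at its poles. -/
noncomputable def besselCoeff (ν : ℂ) (n : ℕ) : ℂ :=
  (-1) ^ n * (Complex.Gamma (ν + 1 + n))⁻¹ / n.factorial

section BesselEntire

theorem succ_mul_besselCoeff_succ (ν : ℂ) (n : ℕ) :
    (n + 1) * besselCoeff ν (n + 1) = -besselCoeff (ν + 1) n := by
  simp only [besselCoeff, Nat.factorial_succ, Nat.cast_mul, Nat.cast_succ,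
    show ν + 1 + (n + 1) = ν + 1 + 1 + n by ring]
  field_simp
  ring

theorem besselCoeff_eq_mul_besselCoeff_add_one (ν : ℂ) (n : ℕ) :
    besselCoeff ν n = (ν + 1 + n) * besselCoeff (ν + 1) n := by
  simp only [besselCoeff, Complex.one_div_Gamma_eq_self_mul_one_div_Gamma_add_one (ν + 1 + n),
    show ν + 1 + n + 1 = ν + 1 + 1 + n by ring]
  ring

theorem hasSum_besselEntire (ν w : ℂ) :
    HasSum (fun n ↦ besselCoeff ν n * w ^ n) (besselEntire ν w) := by
  have hradius : (Complex.regularizedHGFunSeries 0 {ν + 1}).radius = ⊤ :=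
    Complex.radius_regularizedHGFunSeries_eq_top (by simp)
  refine ((Complex.regularizedHGFunSeries 0 {ν + 1}).hasSum (x := -w)
    (by simp [hradius])).congr_fun fun n ↦ ?_
  simp only [besselCoeff, FormalMultilinearSeries.apply_eq_prod_smul_coeff, Finset.prod_const,
    Finset.card_univ, Fintype.card_fin, neg_pow w, Complex.regularizedHGFunSeries_coeff,
    Complex.regularizedHGFunCoeff, Multiset.map_zero, Multiset.prod_zero, Multiset.map_singleton,
    Multiset.prod_singleton, smul_eq_mul]
  ring

theorem hasMinimalExponentialType_besselEntire (ν : ℂ) :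
    HasMinimalExponentialType (besselEntire ν) := by
  refine hasMinimalExponentialType_of_hasSum_div_factorial (hasSum_besselEntire ν) fun r hr ↦ ?_
  have hradius : (Complex.regularizedHGFunSeries {1} {ν + 1}).radius = ⊤ :=
    Complex.radius_regularizedHGFunSeries_eq_top (by simp)
  obtain ⟨C, -, hC⟩ := (Complex.regularizedHGFunSeries {1} {ν + 1}).norm_mul_pow_le_of_lt_radius
    (r := r.toNNReal) (by simp [hradius])
  refine ⟨C, fun n ↦ ?_⟩
  simpa [Complex.regularizedHGFunSeries, FormalMultilinearSeries.ofScalars_norm,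
    Complex.regularizedHGFunCoeff, hr.le, Nat.factorial_ne_zero, ← div_div] using hC n

theorem hasDerivAt_besselEntire (ν w : ℂ) :
    HasDerivAt (besselEntire ν) (-besselEntire (ν + 1) w) w := by
  refine hasDerivAt_of_hasSum_mul_pow (f' := fun v ↦ -besselEntire (ν + 1) v)
    (hasSum_besselEntire ν) (fun v ↦ ?_) w
  simpa only [succ_mul_besselCoeff_succ, neg_mul] using (hasSum_besselEntire (ν + 1) v).neg

theorem differentiable_besselEntire (ν : ℂ) : Differentiable ℂ (besselEntire ν) :=
  fun w ↦ (hasDerivAt_besselEntire ν w).differentiableAt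

theorem deriv_besselEntire (ν w : ℂ) : deriv (besselEntire ν) w = -besselEntire (ν + 1) w :=
  (hasDerivAt_besselEntire ν w).deriv

theorem besselEntire_eq_sub (ν w : ℂ) :
    besselEntire ν w = (ν + 1) * besselEntire (ν + 1) w - w * besselEntire (ν + 1 + 1) w := by
  have hshift : HasSum (fun n : ℕ ↦ n * besselCoeff (ν + 1) n * w ^ n)
      (-(w * besselEntire (ν + 1 + 1) w)) := by
    rw [← hasSum_nat_add_iff' 1]
    convert! ((hasSum_besselEntire (ν + 1 + 1) w).mul_left w).neg using 1
    · funext n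
      push_cast
      rw [succ_mul_besselCoeff_succ]
      ring
    · simp
  refine (hasSum_besselEntire ν w).unique ?_
  convert! ((hasSum_besselEntire (ν + 1) w).mul_left (ν + 1)).add hshift using 1
  funext n
  rw [besselCoeff_eq_mul_besselCoeff_add_one]
  ring

theorem iteratedDeriv_besselEntire (ν : ℂ) (n : ℕ) :
    iteratedDeriv n (besselEntire ν) = fun w ↦ (-1) ^ n * besselEntire (ν + n) w := by
  induction n with
  | zero => simp
  | succ n ih =>
    funext w
    rw [iteratedDeriv_succ, ih, deriv_const_mul_field, deriv_besselEntire]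
    push_cast
    ring_nf

theorem besselEntire_eq_zero_of_consecutive {ν a : ℂ} (ha : a ≠ 0) (h : besselEntire ν a = 0)
    (h' : besselEntire (ν + 1) a = 0) (w : ℂ) : besselEntire ν w = 0 := by
  have hall : ∀ n : ℕ, besselEntire (ν + n) a = 0 ∧ besselEntire (ν + n + 1) a = 0 := by
    intro n
    induction n with
    | zero => simpa using ⟨h, h'⟩
    | succ n ih =>
      have hrec := besselEntire_eq_sub (ν + n) a
      rw [ih.1, ih.2, mul_zero, zero_sub, eq_comm, neg_eq_zero, mul_eq_zero] at hrec
      push_cast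
      rw [← add_assoc]
      exact ⟨ih.2, hrec.resolve_left ha⟩
  rw [← Complex.taylorSeries_eq_of_entire' a w (differentiable_besselEntire ν)]
  simp [iteratedDeriv_besselEntire, (hall _).1]

end BesselEntire

section RealOrder

variable {ν : ℝ}

theorem besselCoeff_ofReal (ν : ℝ) (n : ℕ) :
    besselCoeff ν n = (((-1) ^ n * (Gamma (ν + 1 + n))⁻¹ / n.factorial : ℝ) : ℂ) := by
  simp [besselCoeff, ← Complex.Gamma_ofReal]

theorem hasSum_besselEntire_ofReal_re (ν x : ℝ) :
    HasSum (fun n : ℕ ↦ (-1) ^ n * (Gamma (ν + 1 + n))⁻¹ / n.factorial * x ^ n)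
      (besselEntire ν x).re := by
  convert! Complex.hasSum_re (hasSum_besselEntire ν x) using 2 with n
  rw [besselCoeff_ofReal, ← Complex.ofReal_pow, ← Complex.ofReal_mul, Complex.ofReal_re]

theorem besselEntire_ofReal (ν x : ℝ) : besselEntire ν x = ((besselEntire ν x).re : ℂ) := by
  refine (hasSum_besselEntire ν x).unique ?_
  convert! Complex.hasSum_ofReal.2 (hasSum_besselEntire_ofReal_re ν x) using 2 with n
  simp [besselCoeff_ofReal]

theorem besselEntire_ne_zero_of_nonpos (hν : -1 < ν) {x : ℝ} (hx : x ≤ 0) :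
    besselEntire ν x ≠ 0 := by
  have hGamma : ∀ n : ℕ, 0 < Gamma (ν + 1 + n) := fun n ↦
    Gamma_pos_of_pos (add_pos_of_pos_of_nonneg (by linarith) n.cast_nonneg)
  have hterm : ∀ n : ℕ, (-1) ^ n * (Gamma (ν + 1 + n))⁻¹ / n.factorial * x ^ n =
      (Gamma (ν + 1 + n))⁻¹ / n.factorial * (-x) ^ n := fun n ↦ by
    rw [neg_pow x]
    ring
  have hsum := hasSum_besselEntire_ofReal_re ν x
  simp only [hterm] at hsum
  have hpos : 0 < (besselEntire ν x).re := hsum.tsum_eq ▸ hsum.summable.tsum_pos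
    (fun n ↦ by have := hGamma n; have := neg_nonneg.2 hx; positivity) 0
    (by simpa using hGamma 0)
  exact fun h ↦ hpos.ne' (by simp [h])

theorem hasDerivAt_besselEntire_mul_ofReal (ν a : ℂ) (t : ℝ) :
    HasDerivAt (fun t : ℝ ↦ besselEntire ν (a * t)) (-(a * besselEntire (ν + 1) (a * t))) t := by
  have h := (hasDerivAt_besselEntire ν (a * t)).comp (t : ℂ) ((hasDerivAt_id (t : ℂ)).const_mul a)
  convert! h.comp_ofReal using 1
  ring

theorem hasDerivAt_rpow_mul_besselEntire (ν : ℝ) (a : ℂ) {t : ℝ} (ht : 0 < t) :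
    HasDerivAt (fun t : ℝ ↦ ((t ^ (ν + 1) : ℝ) : ℂ) * besselEntire (ν + 1) (a * t))
      (((t ^ ν : ℝ) : ℂ) * besselEntire ν (a * t)) t := by
  have hpow := (hasDerivAt_rpow_const (x := t) (p := ν + 1) (Or.inl ht.ne')).ofReal_comp
  convert! hpow.mul (hasDerivAt_besselEntire_mul_ofReal (ν + 1) a t) using 1
  rw [besselEntire_eq_sub, rpow_add_one ht.ne', add_sub_cancel_right]
  push_cast
  ring

theorem hasDerivAt_im_conj_besselEntire_mul (ν : ℝ) (a : ℂ) {t : ℝ} (ht : 0 < t) :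
    HasDerivAt (fun t : ℝ ↦ (conj (besselEntire ν (a * t)) *
        (a * (((t ^ (ν + 1) : ℝ) : ℂ) * besselEntire (ν + 1) (a * t)))).im)
      (t ^ ν * Complex.normSq (besselEntire ν (a * t)) * a.im) t := by
  have hconj := (hasDerivAt_besselEntire_mul_ofReal ν a t).star
  have hprod := hconj.mul ((hasDerivAt_rpow_mul_besselEntire ν a ht).const_mul a)
  convert! Complex.imCLM.hasFDerivAt.comp_hasDerivAt t hprod using 1
  simp only [Complex.normSq_apply, star_neg, star_mul', RCLike.star_def, Complex.imCLM_apply,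
    Complex.add_im, Complex.neg_im, Complex.neg_re, Complex.mul_im, Complex.mul_re,
    Complex.conj_re, Complex.conj_im, Complex.ofReal_re, Complex.ofReal_im]
  ring

theorem exists_besselEntire_mul_eq_zero (hν : -1 < ν) {a : ℂ} (ha : a.im ≠ 0)
    (h : besselEntire ν a = 0) : ∃ t ∈ Set.Ioo (0 : ℝ) 1, besselEntire ν (a * t) = 0 := by
  have hpow : Continuous fun t : ℝ ↦ t ^ (ν + 1) := continuous_rpow_const (by linarith)
  have hcont := fun μ : ℂ ↦ (differentiable_besselEntire μ).continuous
  -- Rolle's theorem for a function vanishing at `0` and, because of the conjugate factor, at `1`.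
  obtain ⟨t, ht, hzero⟩ := exists_hasDerivAt_eq_zero (zero_lt_one (α := ℝ))
    (Continuous.continuousOn (by fun_prop)) (by simp [h, zero_rpow (by linarith : ν + 1 ≠ 0)])
    fun t ht ↦ hasDerivAt_im_conj_besselEntire_mul ν a ht.1
  refine ⟨t, ht, Complex.normSq_eq_zero.1 ?_⟩
  simpa [ha, (rpow_pos_of_pos ht.1 ν).ne'] using hzero

theorem im_eq_zero_of_besselEntire_eq_zero (hν : -1 < ν) {a : ℂ} (h : besselEntire ν a = 0) :
    a.im = 0 := by
  by_contra ha
  have hcont := (differentiable_besselEntire ν).continuous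
  have hclosed : IsClosed {t : ℝ | besselEntire ν (a * t) = 0} :=
    isClosed_eq (by fun_prop) continuous_const
  obtain ⟨t, ⟨ht, hzero⟩, hmin⟩ := (isCompact_Icc.inter_right hclosed).exists_isLeast
    ⟨1, Set.right_mem_Icc.2 zero_le_one, by simpa using h⟩
  have ht0 : t ≠ 0 := by
    rintro rfl
    exact besselEntire_ne_zero_of_nonpos hν le_rfl (by simpa using hzero)
  obtain ⟨r, hr, hrzero⟩ := exists_besselEntire_mul_eq_zero hν (by simp [ha, ht0]) hzero
  have htr : t ≤ t * r := hmin ⟨⟨mul_nonneg ht.1 hr.1.le, mul_le_one₀ ht.2 hr.1.le hr.2.le⟩,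
    by simpa [mul_assoc] using hrzero⟩
  exact hr.2.not_ge (le_of_mul_le_mul_left (by simpa using htr) (ht.1.lt_of_ne' ht0))

theorem besselEntire_add_one_ne_zero (hν : -1 < ν) {a : ℂ} (h : besselEntire ν a = 0) :
    besselEntire (ν + 1) a ≠ 0 := fun h' ↦ by
  have h0 : besselEntire ν 0 ≠ 0 := by
    simpa using besselEntire_ne_zero_of_nonpos hν le_rfl
  have ha : a ≠ 0 := by
    rintro rfl
    exact h0 h
  exact h0 (besselEntire_eq_zero_of_consecutive ha h h' 0)

theorem exists_pos_of_besselEntire_eq_zero (hν : -1 < ν) {w : ℂ} (h : besselEntire ν w = 0) :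
    ∃ x : ℝ, 0 < x ∧ w = x := by
  have hw : w = (w.re : ℂ) := Complex.ext rfl (im_eq_zero_of_besselEntire_eq_zero hν h)
  refine ⟨w.re, ?_, hw⟩
  by_contra! hre
  exact besselEntire_ne_zero_of_nonpos hν hre (hw ▸ h)

theorem ofReal_besselJ (ν : ℝ) {z : ℝ} (hz : 0 < z) :
    (besselJ ν z : ℂ) = ((z / 2) ^ ν : ℝ) * besselEntire ν (z ^ 2 / 4 : ℝ) := by
  rw [besselEntire_ofReal, ← (hasSum_besselEntire_ofReal_re ν _).tsum_eq, ← Complex.ofReal_mul,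
    ← tsum_mul_left, besselJ]
  congr 2 with n
  have hpow : (z / 2) ^ (2 * (n : ℝ)) = (z ^ 2 / 4) ^ n := by
    rw [rpow_mul (by positivity), rpow_natCast, rpow_two, div_pow]
    norm_num
  rw [rpow_add (by positivity), hpow, Gamma_nat_eq_factorial,
    show (n : ℝ) + 1 + ν = ν + 1 + n by ring]
  ring

theorem ofReal_besselJ_div (ν : ℝ) {y z : ℝ} (hy : 0 < y) (hz : 0 < z) :
    ((besselJ ν z / (besselJ (ν + 1) y * (z / y) ^ ν) : ℝ) : ℂ) =
      besselEntire ν (z ^ 2 / 4 : ℝ) / (y / 2 * besselEntire (ν + 1) (y ^ 2 / 4 : ℝ)) := by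
  have hyJ := ofReal_besselJ (ν + 1) hy
  have hypow : (((y / 2) ^ ν : ℝ) : ℂ) ≠ 0 :=
    Complex.ofReal_ne_zero.2 (rpow_pos_of_pos (by positivity) ν).ne'
  have hzpow : (((z / y) ^ ν : ℝ) : ℂ) ≠ 0 :=
    Complex.ofReal_ne_zero.2 (rpow_pos_of_pos (by positivity) ν).ne'
  have hsplit : (z / 2) ^ ν = (z / y) ^ ν * (y / 2) ^ ν := by
    rw [← mul_rpow (by positivity) (by positivity), div_mul_div_cancel₀ hy.ne']
  rw [rpow_add_one (by positivity)] at hyJ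
  push_cast at hyJ ⊢
  rw [hyJ, ofReal_besselJ ν hz, hsplit]
  push_cast
  field_simp

theorem besselJ_eq_zero_iff (ν : ℝ) {z : ℝ} (hz : 0 < z) :
    besselJ ν z = 0 ↔ besselEntire ν (z ^ 2 / 4 : ℝ) = 0 := by
  have hpow : (((z / 2) ^ ν : ℝ) : ℂ) ≠ 0 :=
    Complex.ofReal_ne_zero.2 (rpow_pos_of_pos (by positivity) ν).ne'
  rw [← Complex.ofReal_eq_zero, ofReal_besselJ ν hz, mul_eq_zero, or_iff_right hpow]

theorem besselJ_add_one_ne_zero (hν : -1 < ν) {z : ℝ} (hz : 0 < z) (h : besselJ ν z = 0) :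
    besselJ (ν + 1) z ≠ 0 := by
  rw [Ne, besselJ_eq_zero_iff _ hz]
  exact_mod_cast besselEntire_add_one_ne_zero hν ((besselJ_eq_zero_iff ν hz).1 h)

end RealOrder

/-! ### The product over the zeros -/

section Zeros

variable {ι : Type*} {ν : ℝ} {j : ι → ℝ}

theorem isSimpleZeroEnumeration_besselEntire (hν : -1 < ν) (hjpos : ∀ k, 0 < j k)
    (hjzero : ∀ k, besselJ ν (j k) = 0) (hjinj : Function.Injective j)
    (hjall : ∀ z : ℝ, 0 < z → besselJ ν z = 0 → ∃ k, z = j k) :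
    IsSimpleZeroEnumeration (besselEntire ν) fun k ↦ ((j k ^ 2 / 4 : ℝ) : ℂ) := by
  have hzero : ∀ k, besselEntire ν (j k ^ 2 / 4 : ℝ) = 0 := fun k ↦
    (besselJ_eq_zero_iff ν (hjpos k)).1 (hjzero k)
  refine ⟨fun k l hkl ↦ ?_, fun w ↦ ⟨fun hw ↦ ?_, ?_⟩, fun k ↦ ?_⟩
  · have hsq : j k ^ 2 = j l ^ 2 := by linarith [Complex.ofReal_injective hkl]
    exact hjinj ((pow_left_inj₀ (hjpos k).le (hjpos l).le two_ne_zero).1 hsq)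
  · obtain ⟨x, hx, rfl⟩ := exists_pos_of_besselEntire_eq_zero hν hw
    have hsq : (2 * √x) ^ 2 / 4 = x := by
      rw [mul_pow, sq_sqrt hx.le]
      ring
    obtain ⟨k, hk⟩ := hjall (2 * √x) (by positivity)
      ((besselJ_eq_zero_iff ν (by positivity)).2 (by rwa [hsq]))
    exact ⟨k, by rw [← hk, hsq]⟩
  · rintro ⟨k, rfl⟩
    exact hzero k
  · rw [deriv_besselEntire]
    exact neg_ne_zero.2 (besselEntire_add_one_ne_zero hν (hzero k))

theorem hasProd_sq_sub_sq_div_sq_sub_sq (hν : -1 < ν) (hjpos : ∀ k, 0 < j k)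
    (hjzero : ∀ k, besselJ ν (j k) = 0) (hjinj : Function.Injective j)
    (hjall : ∀ z : ℝ, 0 < z → besselJ ν z = 0 → ∃ k, z = j k) (i : ι) {z : ℝ} (hz : 0 < z)
    (hzi : z ≠ j i) :
    HasProd (fun k : {k // k ≠ i} ↦ (j k ^ 2 - z ^ 2) / (j k ^ 2 - j i ^ 2))
      (2 * j i * besselJ ν z / (j i ^ 2 - z ^ 2) / (besselJ (ν + 1) (j i) * (z / j i) ^ ν)) := by
  have henum := isSimpleZeroEnumeration_besselEntire hν hjpos hjzero hjinj hjall
  have hdiff := differentiable_besselEntire ν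
  have hmin := hasMinimalExponentialType_besselEntire ν
  have hF0 : besselEntire ν 0 ≠ 0 := by simpa using besselEntire_ne_zero_of_nonpos hν le_rfl
  have hapos : ∀ k, 0 < j k ^ 2 / 4 := fun k ↦ by have := hjpos k; positivity
  have hsum : Summable fun k ↦ ‖((j k ^ 2 / 4 : ℝ) : ℂ)‖⁻¹ := by
    simpa only [Complex.norm_of_nonneg (hapos _).le] using
      henum.summable_inv_of_pos hdiff hmin hapos
  have hsq : j i ^ 2 - z ^ 2 ≠ 0 := sub_ne_zero.2 fun h ↦
    hzi ((pow_left_inj₀ hz.le (hjpos i).le two_ne_zero).1 h.symm)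
  have hprod := henum.hasProd_sub_div_sub hdiff hF0 hmin hsum i (w := (z ^ 2 / 4 : ℝ))
    fun h ↦ hsq (by linarith [Complex.ofReal_injective h])
  rw [← hasProd_ofReal]
  convert! hprod using 1
  · funext k
    push_cast
    rw [← sub_div, ← sub_div, div_div_div_cancel_right₀ (by norm_num)]
  · have hsq' : (z : ℂ) ^ 2 - (j i : ℂ) ^ 2 ≠ 0 := by
      rw [← neg_sub, neg_ne_zero]
      exact_mod_cast hsq
    have hji : (j i : ℂ) ≠ 0 := Complex.ofReal_ne_zero.2 (hjpos i).ne'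
    rw [mul_div_right_comm, mul_div_assoc, Complex.ofReal_mul, ofReal_besselJ_div ν (hjpos i) hz,
      deriv_besselEntire]
    push_cast
    rw [← neg_sub ((z : ℂ) ^ 2), ← sub_div]
    field_simp
    ring

end Zeros

theorem weierstrass_product_bessel_zero_general {ι : Type*} (ν : ℝ) (hν : -1 < ν) (j : ι → ℝ)
    (hjpos : ∀ k, 0 < j k) (hjzero : ∀ k, besselJ ν (j k) = 0)
    (hjinj : Function.Injective j)
    (hjall : ∀ z : ℝ, 0 < z → besselJ ν z = 0 → ∃ k, z = j k)
    (i : ι) (z : ℝ) (hz : 0 < z) (hzi : z ≠ j i) :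
    (Multipliable fun k : {k : ι // k ≠ i} =>
        ((j k.1) ^ 2 - z ^ 2) / ((j k.1) ^ 2 - (j i) ^ 2)) ∧
      besselJ (ν + 1) (j i) * (z / j i) ^ ν *
          (∏' k : {k : ι // k ≠ i}, ((j k.1) ^ 2 - z ^ 2) / ((j k.1) ^ 2 - (j i) ^ 2))
        = 2 * j i * besselJ ν z / ((j i) ^ 2 - z ^ 2) := by
  have hprod := hasProd_sq_sub_sq_div_sq_sub_sq hν hjpos hjzero hjinj hjall i hz hzi
  have hJ := besselJ_add_one_ne_zero hν (hjpos i) (hjzero i)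
  have hpow : (z / j i) ^ ν ≠ 0 := (rpow_pos_of_pos (div_pos hz (hjpos i)) ν).ne'
  exact ⟨hprod.multipliable, by rw [hprod.tprod_eq, mul_div_cancel₀ _ (mul_ne_zero hJ hpow)]⟩

/-- For the configuration of squared positive Bessel zeros,
`J_{ν+1}(j_{ν,i}) Φ^{(ν)}(ξ_{J_ν}^{⟨2⟩}, j_{ν,i}², z²) = 2 j_{ν,i} J_ν(z)/(j_{ν,i}² − z²)`. -/
theorem weierstrass_product_bessel_zero
    (ν : ℝ) (hν : -1 < ν) (j : ℕ → ℝ)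
    (hjpos : ∀ k, 0 < j k) (hjzero : ∀ k, besselJ ν (j k) = 0)
    (hjmono : StrictMono j)
    (hjall : ∀ z : ℝ, 0 < z → besselJ ν z = 0 → ∃ k, z = j k)
    (i : ℕ) (z : ℝ) (hz : 0 < z) (hzi : z ≠ j i) :
    (Multipliable fun k : {k : ℕ // k ≠ i} =>
        ((j k.1) ^ 2 - z ^ 2) / ((j k.1) ^ 2 - (j i) ^ 2)) ∧
      besselJ (ν + 1) (j i) * (z / j i) ^ ν *
          (∏' k : {k : ℕ // k ≠ i}, ((j k.1) ^ 2 - z ^ 2) / ((j k.1) ^ 2 - (j i) ^ 2))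
        = 2 * j i * besselJ ν z / ((j i) ^ 2 - z ^ 2) :=
  weierstrass_product_bessel_zero_general ν hν j hjpos hjzero hjmono.injective hjall i z hz hzi
end
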